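/- arXiv:2201.00788 — 8 statements merged into one kernel-verified Lean document; each statement's English description precedes it below -/
import Mathlib

section
/- For every pair of integers n > m ≥ 1, there exist complex polynomials p of degree n and q of degree m and a finite set S of complex numbers with cardinality at least ⌈n·√m⌉ such that every z ∈ S satisfies p(z) + conj(q(z)) = 0. (In other words, the harmonic polynomial p(z) + conj(q(z)) has at least ⌈n·√m⌉ zeros.) -/
/-!
The polynomials are `q = e^{iβ} (z - 1)^m` and `p = ε z^n - q`, with `β = π / (4n)` and a small
`ε > 0`; they give as many as `n * m` zeros, and `n * m ≥ n √m`.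

Indeed `p(z) + conj (q(z)) = ε z^n - 2 i Im q(z)`, so on each of the `n` lines
`z = e^{iθ} r`, `θ = π (2k + 1) / (2n)`, where `z^n = (-1)^k i r^n`, the equation becomes the single
real equation `2 Im q(z) = ε (-1)^k r^n`. For `ε = 0` its solutions are the intersections of the line
with the `m` lines `Im q = 0` through the point `1`. Viewing the line from the point `1`,
that is putting `r = sin (θ + φ) / sin φ` with `0 < φ < π`, gives (`point_sub_one`)
`z - 1 = (sin θ / sin φ) e^{i(θ + φ)}`, so that `Im q(z)` has the sign of `sin (m (θ + φ) + β)`.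
This takes alternating signs at `m + 1` values of `φ` (`exists_alternating`). The finitely many sign
changes survive for small `ε`, and the intermediate value theorem gives `m` zeros on each line. The
choice of `β` ensures that no line `Im q = 0` is parallel to one of the `n` lines, and that `0`, the
only common point of the `n` lines, is not a zero.
-/

open Polynomial Complex

theorem exists_zero_of_mul_neg {f : ℝ → ℝ} {a b : ℝ} (hab : a < b)
    (hf : ContinuousOn f (Set.Icc a b)) (h : f a * f b < 0) :
    ∃ c ∈ Set.Ioo a b, f c = 0 := by
  rcases mul_neg_iff.1 h with ⟨h1, h2⟩ | ⟨h1, h2⟩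
  · obtain ⟨c, hc, hc0⟩ := intermediate_value_Ioo' hab.le hf (show (0 : ℝ) ∈ Set.Ioo _ _ from ⟨h2, h1⟩)
    exact ⟨c, hc, hc0⟩
  · obtain ⟨c, hc, hc0⟩ := intermediate_value_Ioo hab.le hf (show (0 : ℝ) ∈ Set.Ioo _ _ from ⟨h1, h2⟩)
    exact ⟨c, hc, hc0⟩

theorem exists_alternating (m : ℕ) (hm : 1 ≤ m) (δ : ℝ) (hδ : Real.sin δ ≠ 0) :
    ∃ x : ℕ → ℝ, StrictMono x ∧ (∀ j ≤ m, 0 < x j ∧ x j < Real.pi) ∧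
      ∀ j, Real.sin (m * x j + δ) * Real.sin (m * x (j + 1) + δ) < 0 := by
  have hπ := Real.pi_pos
  have hm0 : (0 : ℝ) < m := by exact_mod_cast hm
  -- Reduce `δ` modulo `π` to `d ∈ (0, π)`.
  obtain ⟨N, d, hd0, hdπ, hdec⟩ : ∃ (N : ℤ) (d : ℝ), 0 < d ∧ d < Real.pi ∧ δ = d + N * Real.pi := by
    refine ⟨⌊δ / Real.pi⌋, Int.fract (δ / Real.pi) * Real.pi, ?_, ?_, ?_⟩
    · refine mul_pos (lt_of_le_of_ne (Int.fract_nonneg _) fun h => hδ ?_) hπ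
      have h2 := Int.floor_add_fract (δ / Real.pi)
      rw [← h, add_zero, eq_div_iff hπ.ne'] at h2
      rw [← h2]; exact Real.sin_int_mul_pi _
    · have := Int.fract_lt_one (δ / Real.pi)
      nlinarith
    · have h2 := Int.floor_add_fract (δ / Real.pi)
      rw [← add_mul, add_comm, h2]; field_simp
  -- The zeros of `φ ↦ sin (m φ + d)` in `(0, π)` are `(j π - d) / m`, `1 ≤ j ≤ m`; one point is
  -- taken between `0` and the first of them and one soon after each of them.
  let y : ℕ → ℝ := fun j => if j = 0 then (Real.pi - d) / 2 else j * Real.pi - d / 2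
  have hs : ∀ j, ∃ s : ℝ, 0 < s ∧ Real.sin (y j + d) = (-1) ^ j * s := by
    intro j
    rcases Nat.eq_zero_or_pos j with rfl | hj
    · refine ⟨_, Real.sin_pos_of_pos_of_lt_pi (x := y 0 + d) ?_ ?_, by simp⟩ <;>
        simp only [y, if_true] <;> linarith
    · refine ⟨Real.sin (d / 2), Real.sin_pos_of_pos_of_lt_pi (by linarith) (by linarith), ?_⟩
      simp only [y, if_neg hj.ne']
      rw [← Real.sin_add_nat_mul_pi]
      congr 1; ring
  refine ⟨fun j => y j / m, strictMono_nat_of_lt_succ fun j => ?_, fun j hj => ?_, fun j => ?_⟩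
  · refine div_lt_div_of_pos_right ?_ hm0
    rcases Nat.eq_zero_or_pos j with rfl | hj
    · simp [y]; linarith
    · simp [y, hj.ne']; linarith
  · rw [lt_div_iff₀ hm0, div_lt_iff₀ hm0]
    have hm1 : (1 : ℝ) ≤ m := by exact_mod_cast hm
    rcases Nat.eq_zero_or_pos j with rfl | hj0
    · simp only [y, if_true]
      constructor <;> nlinarith
    · have h1 : (1 : ℝ) ≤ j := by exact_mod_cast hj0
      have h2 : (j : ℝ) ≤ m := by exact_mod_cast hj
      simp only [y, if_neg hj0.ne']
      constructor <;> nlinarith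
  · have key : ∀ i, Real.sin (m * (y i / m) + δ) = (-1) ^ N * Real.sin (y i + d) := by
      intro i
      rw [mul_div_cancel₀ _ hm0.ne', hdec, ← add_assoc, Real.sin_add_int_mul_pi]
    obtain ⟨s, hs0, hs1⟩ := hs j
    obtain ⟨t, ht0, ht1⟩ := hs (j + 1)
    simp only [key, hs1, ht1]
    have e1 : ((-1 : ℝ) ^ N) * (-1) ^ N = 1 := by rw [← mul_zpow]; simp
    have e2 : ((-1 : ℝ) ^ j) * (-1) ^ j = 1 := by rw [← mul_pow]; simp
    have : (-1 : ℝ) ^ N * ((-1) ^ j * s) * ((-1) ^ N * ((-1) ^ (j + 1) * t)) = -(s * t) := by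
      calc _ = -(((-1 : ℝ) ^ N * (-1) ^ N) * ((-1 : ℝ) ^ j * (-1) ^ j) * (s * t)) := by ring
        _ = _ := by rw [e1, e2]; ring
    rw [this]; nlinarith [mul_pos hs0 ht0]

/-- The coordinate `r`, along the line through `0` of direction `e^{iθ}`, of the point that is seen
from `1` in the direction `e^{i(θ + φ)}`. -/
noncomputable def lineCoord (θ φ : ℝ) : ℝ := Real.sin (θ + φ) / Real.sin φ

/-- The point of the line through `0` of direction `e^{iθ}` with coordinate `lineCoord θ φ`. -/
noncomputable def linePoint (θ φ : ℝ) : ℂ := exp (θ * I) * (lineCoord θ φ : ℝ)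

theorem point_sub_one (θ φ : ℝ) (hφ : Real.sin φ ≠ 0) :
    linePoint θ φ - 1 = ((Real.sin θ / Real.sin φ : ℝ) : ℂ) * exp ((θ + φ : ℝ) * I) := by
  have h2 : Real.sin θ ^ 2 = 1 - Real.cos θ ^ 2 := Real.sin_sq θ
  apply Complex.ext
  · simp only [linePoint, lineCoord, sub_re, mul_re, exp_ofReal_mul_I_re, exp_ofReal_mul_I_im,
      ofReal_re, ofReal_im, one_re]
    field_simp
    rw [Real.sin_add, Real.cos_add]
    linear_combination Real.sin φ * h2
  · simp only [linePoint, lineCoord, sub_im, mul_im, exp_ofReal_mul_I_re, exp_ofReal_mul_I_im,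
      ofReal_re, ofReal_im, one_im]
    field_simp
    ring

theorem im_eval_q (m : ℕ) (β θ φ : ℝ) (hφ : Real.sin φ ≠ 0) :
    (exp (β * I) * (linePoint θ φ - 1) ^ m).im =
      (Real.sin θ / Real.sin φ) ^ m * Real.sin (m * φ + (m * θ + β)) := by
  have : exp (β * I) * (linePoint θ φ - 1) ^ m =
      (((Real.sin θ / Real.sin φ) ^ m : ℝ) : ℂ) * exp ((m * φ + (m * θ + β) : ℝ) * I) := by
    rw [point_sub_one θ φ hφ, mul_pow, ← Complex.exp_nat_mul, mul_left_comm, ← Complex.exp_add,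
      ofReal_pow]
    congr 2
    push_cast; ring
  rw [this, im_ofReal_mul, exp_ofReal_mul_I_im]

theorem sin_ne_zero_of_odd (n : ℕ) (hn : 0 < n) (a : ℤ) (ha : Odd a) :
    Real.sin (a * Real.pi / (4 * n)) ≠ 0 := by
  have hn' : (n : ℝ) ≠ 0 := by exact_mod_cast hn.ne'
  intro h
  obtain ⟨k, hk⟩ := Real.sin_eq_zero_iff.1 h
  rw [eq_div_iff (by positivity)] at hk
  have h2 : ((k * (4 * n) : ℤ) : ℝ) = a := by
    have := Real.pi_ne_zero
    push_cast
    apply mul_right_cancel₀ this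
    linarith
  have h3 : k * (4 * n) = a := by exact_mod_cast h2
  rw [← h3] at ha
  have : Even (k * (4 * (n : ℤ))) := ⟨k * (2 * n), by ring⟩
  exact (Int.not_even_iff_odd.2 ha) this

/-- Two points away from `0` coincide only if they lie on the same line and have the same angle. -/
theorem linePoint_inj {θ φ θ' φ' : ℝ} (hθ : θ ∈ Set.Ioo 0 Real.pi) (hθ' : θ' ∈ Set.Ioo 0 Real.pi)
    (hφ : φ ∈ Set.Ioo 0 Real.pi) (hφ' : φ' ∈ Set.Ioo 0 Real.pi)
    (h0 : linePoint θ φ ≠ 0) (h : linePoint θ φ = linePoint θ' φ') : θ = θ' ∧ φ = φ' := by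
  have aux : ∀ {a b : ℝ}, a ∈ Set.Ioo 0 Real.pi → b ∈ Set.Ioo 0 Real.pi → Real.sin (a - b) = 0 →
      a = b := by
    intro a b ha hb hs
    have := (Real.sin_eq_zero_iff_of_lt_of_lt (by linarith [ha.1, hb.2])
      (by linarith [ha.2, hb.1])).1 hs
    linarith
  have hr : lineCoord θ φ ≠ 0 := by
    intro hr; apply h0; simp [linePoint, hr]
  have hre := congrArg re h
  have him := congrArg im h
  simp only [linePoint, mul_re, mul_im, exp_ofReal_mul_I_re, exp_ofReal_mul_I_im,
      ofReal_re, ofReal_im, mul_zero, sub_zero, zero_add] at hre him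
  have hθe : θ = θ' := by
    apply aux hθ hθ'
    apply mul_left_cancel₀ hr
    rw [Real.sin_sub]
    linear_combination Real.cos θ' * him - Real.sin θ' * hre
  subst hθe
  refine ⟨rfl, aux hφ hφ' ?_⟩
  have hsθ := (Real.sin_pos_of_mem_Ioo hθ).ne'
  have hsφ := (Real.sin_pos_of_mem_Ioo hφ).ne'
  have hsφ' := (Real.sin_pos_of_mem_Ioo hφ').ne'
  have hrr : lineCoord θ φ = lineCoord θ φ' := mul_left_cancel₀ hsθ (by linarith)
  rw [lineCoord, lineCoord, div_eq_div_iff hsφ hsφ', Real.sin_add, Real.sin_add] at hrr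
  apply mul_left_cancel₀ hsθ
  rw [Real.sin_sub]
  linear_combination -hrr

/-- For every pair of integers `n > m ≥ 1`, there exist complex polynomials `p` of degree `n`
and `q` of degree `m` and a finite set `S` of complex numbers with cardinality at least
`⌈n·√m⌉` such that every `z ∈ S` satisfies `p(z) + conj(q(z)) = 0`. -/
theorem valence_ge_n_sqrt_m (n m : ℕ) (hm : 1 ≤ m) (hmn : m < n) :
    ∃ (p q : Polynomial ℂ) (S : Finset ℂ),
      p.degree = n ∧ q.degree = m ∧
      ⌈(n : ℝ) * Real.sqrt m⌉ ≤ (S.card : ℤ) ∧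
      ∀ z ∈ S, p.eval z + (starRingEnd ℂ) (q.eval z) = 0 := by
  have hπ := Real.pi_pos
  have hn : 0 < n := by omega
  have hn0 : (0 : ℝ) < n := by exact_mod_cast hn
  let β : ℝ := Real.pi / (4 * n)
  let θ : Fin n → ℝ := fun k => (2 * (k : ℕ) + 1) * Real.pi / (2 * n)
  have hθ : ∀ k, θ k ∈ Set.Ioo 0 Real.pi := by
    intro k
    have hk : ((k : ℕ) : ℝ) + 1 ≤ n := by exact_mod_cast k.2
    refine ⟨by positivity, ?_⟩
    simp only [θ]
    rw [div_lt_iff₀ (by positivity)]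
    nlinarith
  have hθinj : Function.Injective θ := by
    intro k l h
    simp only [θ] at h
    rw [div_left_inj' (by positivity), mul_left_inj' hπ.ne', add_left_inj,
      mul_right_inj' two_ne_zero] at h
    exact Fin.ext (by exact_mod_cast h)
  have hδ : ∀ k, Real.sin (m * θ k + β) ≠ 0 := by
    intro k
    have := sin_ne_zero_of_odd n hn (2 * (m * (2 * (k : ℕ) + 1)) + 1) ⟨_, rfl⟩
    convert this using 2
    simp only [θ, β]
    push_cast
    field_simp
    ring
  have hβ : Real.sin β ≠ 0 := by
    have := sin_ne_zero_of_odd n hn 1 odd_one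
    convert this using 2
    simp [β]
  choose x hxmono hxmem hxsign using fun k => exists_alternating m hm (m * θ k + β) (hδ k)
  -- `F k` is `Im q` along the `k`-th line, and `2 F - ε H` vanishes exactly at the zeros sought.
  let F : Fin n → ℝ → ℝ := fun k φ =>
    (Real.sin (θ k) / Real.sin φ) ^ m * Real.sin (m * φ + (m * θ k + β))
  let H : Fin n → ℝ → ℝ := fun k φ => (-1) ^ (k : ℕ) * lineCoord (θ k) φ ^ n
  have hFsign : ∀ k, ∀ j : Fin m, F k (x k j) * F k (x k (j + 1)) < 0 := by
    intro k j
    have hj := j.2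
    have hs := Real.sin_pos_of_mem_Ioo (hθ k)
    have h1 := Real.sin_pos_of_mem_Ioo (hxmem k j (by omega))
    have h2 := Real.sin_pos_of_mem_Ioo (hxmem k (j + 1) (by omega))
    have h3 := mul_pos (pow_pos (div_pos hs h1) m) (pow_pos (div_pos hs h2) m)
    have := mul_neg_of_pos_of_neg h3 (hxsign k j)
    simp only [F]
    linarith
  obtain ⟨ε, hε0, hε⟩ : ∃ ε : ℝ, 0 < ε ∧ ∀ k, ∀ j : Fin m,
      (2 * F k (x k j) - ε * H k (x k j)) *
        (2 * F k (x k (j + 1)) - ε * H k (x k (j + 1))) < 0 := by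
    have hev : ∀ᶠ ε in nhdsWithin (0 : ℝ) (Set.Ioi 0), ∀ k, ∀ j : Fin m,
      (2 * F k (x k j) - ε * H k (x k j)) *
        (2 * F k (x k (j + 1)) - ε * H k (x k (j + 1))) < 0 := by
      rw [Filter.eventually_all]; intro k
      rw [Filter.eventually_all]; intro j
      apply Filter.Eventually.filter_mono nhdsWithin_le_nhds
      refine ContinuousAt.eventually_lt (by fun_prop) continuousAt_const ?_
      have := hFsign k j
      nlinarith
    obtain ⟨ε, h1, h2⟩ := (hev.and self_mem_nhdsWithin).exists
    exact ⟨ε, h2, h1⟩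
  have hroot : ∀ k, ∀ j : Fin m, ∃ φ ∈ Set.Ioo (x k j) (x k (j + 1)),
      2 * F k φ - ε * H k φ = 0 := by
    intro k j
    refine exists_zero_of_mul_neg (f := fun φ => 2 * F k φ - ε * H k φ)
      (hxmono k (Nat.lt_succ_self _)) ?_ (hε k j)
    have hne : ∀ φ ∈ Set.Icc (x k j) (x k (j + 1)), Real.sin φ ≠ 0 := by
      intro φ hφ
      have hj := j.2
      exact (Real.sin_pos_of_mem_Ioo ⟨(hxmem k j (by omega)).1.trans_le hφ.1,
        hφ.2.trans_lt (hxmem k (j + 1) (by omega)).2⟩).ne'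
    simp only [F, H, lineCoord]
    fun_prop (disch := assumption)
  choose φ hφmem hφ0 using hroot
  have hφπ : ∀ k j, φ k j ∈ Set.Ioo 0 Real.pi := by
    intro k j
    have hj := j.2
    exact ⟨(hxmem k j (by omega)).1.trans (hφmem k j).1,
        (hφmem k j).2.trans (hxmem k (j + 1) (by omega)).2⟩
  have hsφ : ∀ k j, Real.sin (φ k j) ≠ 0 := fun k j => (Real.sin_pos_of_mem_Ioo (hφπ k j)).ne'
  have hφinj : ∀ k, Function.Injective (φ k) := by
    intro k
    refine StrictMono.injective fun i j hij => ?_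
    have : x k (i + 1) ≤ x k j := (hxmono k).monotone (by simpa using hij)
    linarith [(hφmem k i).2, (hφmem k j).1]
  have hF : ∀ k j, (exp (β * I) * (linePoint (θ k) (φ k j) - 1) ^ m).im = F k (φ k j) :=
    fun k j => im_eval_q m β (θ k) (φ k j) (hsφ k j)
  -- At `0` the equation would read `Im (e^{iβ} (-1)^m) = 0`.
  have hz0 : ∀ k j, linePoint (θ k) (φ k j) ≠ 0 := by
    intro k j h
    have hr : lineCoord (θ k) (φ k j) = 0 := by
      simpa [linePoint, Complex.exp_ne_zero] using h
    have h1 := hφ0 k j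
    have h2 := hF k j
    simp only [H, hr, zero_pow hn.ne', mul_zero, sub_zero] at h1
    rw [h, zero_sub, show ((-1 : ℂ) ^ m) = (((-1) ^ m : ℝ) : ℂ) by push_cast; rfl,
      im_mul_ofReal, exp_ofReal_mul_I_im] at h2
    have : F k (φ k j) = 0 := by linarith
    rw [this] at h2
    exact mul_ne_zero hβ (pow_ne_zero m (by norm_num)) h2
  have hpow : ∀ k : Fin n, exp (θ k * I) ^ n = (-1) ^ (k : ℕ) * I := by
    intro k
    have hnC : (n : ℂ) ≠ 0 := by exact_mod_cast hn.ne'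
    rw [← Complex.exp_nat_mul, show (n : ℂ) * (θ k * I) =
      (k : ℕ) * (Real.pi * I) + Real.pi / 2 * I by simp only [θ]; push_cast; field_simp,
      Complex.exp_add, Complex.exp_nat_mul, Complex.exp_pi_mul_I, Complex.exp_pi_div_two_mul_I]
  let q : Polynomial ℂ := C (exp (β * I)) * (X - C 1) ^ m
  have hq : q.degree = m := by
    simp only [q]
    rw [degree_C_mul (Complex.exp_ne_zero _), degree_pow, degree_X_sub_C]; simp
  have hεC : (ε : ℂ) ≠ 0 := by exact_mod_cast hε0.ne'
  refine ⟨C (ε : ℂ) * X ^ n - q, q,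
    Finset.univ.image fun a : Fin n × Fin m => linePoint (θ a.1) (φ a.1 a.2), ?_, hq, ?_, ?_⟩
  · have h1 : (C (ε : ℂ) * X ^ n).degree = (n : WithBot ℕ) := degree_C_mul_X_pow n hεC
    rw [degree_sub_eq_left_of_degree_lt, h1]
    rw [h1, hq]; exact_mod_cast hmn
  · rw [Finset.card_image_of_injective]
    · simp only [Finset.card_univ, Fintype.card_prod, Fintype.card_fin]
      rw [Int.ceil_le]
      push_cast
      refine mul_le_mul_of_nonneg_left ?_ hn0.le
      rw [Real.sqrt_le_left (by positivity)]
      have : (1 : ℝ) ≤ m := by exact_mod_cast hm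
      nlinarith
    · rintro ⟨k, j⟩ ⟨l, i⟩ h
      obtain ⟨h1, h2⟩ := linePoint_inj (hθ k) (hθ l) (hφπ k j) (hφπ l i) (hz0 k j) h
      obtain rfl := hθinj h1
      obtain rfl := hφinj k h2
      rfl
  · intro z hz
    simp only [Finset.mem_image, Finset.mem_univ, true_and, Prod.exists] at hz
    obtain ⟨k, j, rfl⟩ := hz
    have hzn : linePoint (θ k) (φ k j) ^ n = (H k (φ k j) : ℂ) * I := by
      rw [linePoint, mul_pow, hpow]
      simp only [H]; push_cast; ring
    have hqe : q.eval (linePoint (θ k) (φ k j)) =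
        exp (β * I) * (linePoint (θ k) (φ k j) - 1) ^ m := by simp [q]
    have hconj := Complex.sub_conj (q.eval (linePoint (θ k) (φ k j)))
    have h0 : ((2 * F k (φ k j) - ε * H k (φ k j) : ℝ) : ℂ) = 0 := by
      rw [hφ0 k j]; simp
    rw [hqe, hF k j, ← hqe] at hconj
    push_cast at h0 hconj
    simp only [eval_sub, eval_mul, eval_C, eval_pow, eval_X, hzn]
    linear_combination -hconj - I * h0
end

section
/- For every real number C there exist integers n > m ≥ 1, complex polynomials p of degree n and q of degree m, and a finite set S of complex numbers with cardinality strictly greater than C·n such that every z ∈ S satisfies p(z) + conj(q(z)) = 0. Hence there is no bound on the number of zeros of p(z) + conj(q(z)) that is linear in n with a growth rate uniform in m. -/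
open Polynomial Complex

/-!
The polynomials are Wilmshurst's: `p = i (Xⁿ + (X+1)ⁿ)` and `q = i ((X+1)ⁿ - Xⁿ)`, of degrees
`n` and `n - 1`. If `zⁿ` is purely imaginary and `(z+1)ⁿ` is real, then `p(z) + conj (q(z)) = 0`.
The first condition describes `n` lines through `0`, the second `n` lines through `-1`, and
every non-horizontal line of one family meets every non-horizontal line of the other.

A line of direction `s + i` through `0` and one of direction `t + i` through `-1` meet at
`z = (s + i) / (t - s)`, where `z + 1 = (t + i) / (t - s)`. The admissible `s`, `t` are
`cot (k π / 2n)` with `0 < k < 2n`, odd `k` for `s` and even `k` for `t`, because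
`(cot (k π / 2n) + i)ⁿ` is a real multiple of `iᵏ` (`exists_cotAngle_pow`). As these values are
distinct (`cotAngle_inj`), this gives `n (n - 1)` zeros, which exceeds `C n` as soon as `n - 1 > C`.
-/

/-- The number `cot (k π / 2n)`, so that `cotAngle n k + i` has argument `k π / 2n`
for `0 < k < 2n`. -/
noncomputable def cotAngle (n k : ℕ) : ℝ :=
  Real.cos (k * Real.pi / (2 * n)) / Real.sin (k * Real.pi / (2 * n))

lemma sin_angle_pos {n k : ℕ} (hk : 0 < k) (hkn : k < 2 * n) :
    0 < Real.sin (k * Real.pi / (2 * n)) := by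
  have hn : (0 : ℝ) < 2 * n := by exact_mod_cast (by omega : 0 < 2 * n)
  have hk' : (0 : ℝ) < k := by exact_mod_cast hk
  have hkn' : (k : ℝ) < 2 * n := by exact_mod_cast hkn
  apply Real.sin_pos_of_pos_of_lt_pi
  · have := Real.pi_pos
    positivity
  · rw [div_lt_iff₀ hn]
    nlinarith [Real.pi_pos]

lemma exists_cotAngle_pow {n k : ℕ} (hk : 0 < k) (hkn : k < 2 * n) :
    ∃ r : ℝ, ((cotAngle n k : ℂ) + I) ^ n = r * I ^ k := by
  have hs := sin_angle_pos hk hkn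
  have hn : (n : ℂ) ≠ 0 := by exact_mod_cast (by omega : n ≠ 0)
  set θ : ℝ := k * Real.pi / (2 * n) with hθ
  have h1 : (cotAngle n k : ℂ) + I = ((Real.sin θ)⁻¹ : ℝ) * Complex.exp (θ * I) := by
    have hs' : (Real.sin θ : ℂ) ≠ 0 := by exact_mod_cast hs.ne'
    rw [Complex.exp_mul_I, ← Complex.ofReal_cos, ← Complex.ofReal_sin]
    simp only [cotAngle, ← hθ, Complex.ofReal_div, Complex.ofReal_inv]
    field_simp
  refine ⟨(Real.sin θ)⁻¹ ^ n, ?_⟩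
  have h2 : Complex.exp (θ * I) ^ n = I ^ k := by
    have hI : I ^ k = Complex.exp (k * (Real.pi / 2 * I)) := by
      rw [Complex.exp_nat_mul, Complex.exp_pi_div_two_mul_I]
    rw [hI, ← Complex.exp_nat_mul]
    congr 1
    rw [hθ]
    push_cast
    field_simp
  rw [h1, mul_pow, h2]
  push_cast
  rfl

lemma cotAngle_inj {n k l : ℕ} (hk : 0 < k) (hkn : k < 2 * n) (hl : 0 < l) (hln : l < 2 * n)
    (h : cotAngle n k = cotAngle n l) : k = l := by
  have hsk := sin_angle_pos hk hkn
  have hsl := sin_angle_pos hl hln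
  have hn : (0 : ℝ) < 2 * n := by exact_mod_cast (by omega : 0 < 2 * n)
  unfold cotAngle at h
  rw [div_eq_div_iff hsk.ne' hsl.ne'] at h
  have h0 : Real.sin (k * Real.pi / (2 * n) - l * Real.pi / (2 * n)) = 0 := by
    rw [Real.sin_sub]
    linarith
  have hkl : (k : ℝ) * Real.pi / (2 * n) - l * Real.pi / (2 * n)
      = (k - l) / (2 * n) * Real.pi := by ring
  have hk0 : (0 : ℝ) < k := by exact_mod_cast hk
  have hl0 : (0 : ℝ) < l := by exact_mod_cast hl
  have hk1 : (k : ℝ) < 2 * n := by exact_mod_cast hkn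
  have hl1 : (l : ℝ) < 2 * n := by exact_mod_cast hln
  have hlow : -1 < ((k : ℝ) - l) / (2 * n) := by
    rw [lt_div_iff₀ hn]
    linarith
  have hupp : ((k : ℝ) - l) / (2 * n) < 1 := by
    rw [div_lt_iff₀ hn]
    linarith
  rw [hkl, Real.sin_eq_zero_iff_of_lt_of_lt (by nlinarith [Real.pi_pos])
    (by nlinarith [Real.pi_pos])] at h0
  have : (k : ℝ) - l = 0 := by
    simpa [Real.pi_ne_zero, hn.ne'] using h0
  exact_mod_cast sub_eq_zero.mp this

/-- The intersection of the line of direction `s + i` through `0` with the line of direction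
`t + i` through `-1` (for `s ≠ t`). -/
noncomputable def meet (s t : ℝ) : ℂ := (s + I) / ((t - s : ℝ) : ℂ)

lemma meet_add_one {s t : ℝ} (h : s ≠ t) : meet s t + 1 = (t + I) / ((t - s : ℝ) : ℂ) := by
  have : ((t - s : ℝ) : ℂ) ≠ 0 := by exact_mod_cast sub_ne_zero.mpr h.symm
  unfold meet
  rw [div_add_one this]
  push_cast
  ring

lemma meet_inj {s t s' t' : ℝ} (h : s ≠ t) (h' : s' ≠ t') (he : meet s t = meet s' t') :
    s = s' ∧ t = t' := by
  have hd : t - s ≠ 0 := sub_ne_zero.mpr h.symm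
  have hd' : t' - s' ≠ 0 := sub_ne_zero.mpr h'.symm
  unfold meet at he
  have him := congrArg Complex.im he
  have hre := congrArg Complex.re he
  rw [Complex.div_ofReal_im, Complex.div_ofReal_im] at him
  rw [Complex.div_ofReal_re, Complex.div_ofReal_re] at hre
  simp only [add_im, ofReal_im, I_im, zero_add, add_re, ofReal_re, I_re, add_zero] at him hre
  have e : t - s = t' - s' := by
    field_simp at him
    linarith
  rw [e, div_left_inj' hd'] at hre
  exact ⟨hre, by linarith⟩

/-- Wilmshurst's `p = i (Xⁿ + (X+1)ⁿ)` and `q = i ((X+1)ⁿ - Xⁿ)` satisfy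
`p(z) + conj (q(z)) = 0` at every `z` with `zⁿ ∈ iℝ` and `(z+1)ⁿ ∈ ℝ`. -/
lemma eval_eq_zero {n : ℕ} {z : ℂ} {a b : ℝ} (ha : z ^ n = a * I) (hb : (z + 1) ^ n = b) :
    (C I * (X ^ n + (X + 1) ^ n) : ℂ[X]).eval z
      + (starRingEnd ℂ) ((C I * ((X + 1) ^ n - X ^ n) : ℂ[X]).eval z) = 0 := by
  simp only [eval_mul, eval_C, eval_add, eval_sub, eval_pow, eval_X, eval_one, ha, hb, map_mul,
    map_sub, conj_I, conj_ofReal]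
  ring

lemma degree_p (m : ℕ) :
    (C I * (X ^ (m + 1) + (X + 1) ^ (m + 1)) : ℂ[X]).degree = ((m + 1 : ℕ) : WithBot ℕ) := by
  rw [degree_C_mul I_ne_zero]
  apply degree_eq_of_le_of_coeff_ne_zero
  · compute_degree
    exact le_of_eq (by push_cast; rfl)
  · rw [coeff_add, coeff_X_add_one_pow, coeff_X_pow]
    norm_num

lemma degree_q (m : ℕ) :
    (C I * ((X + 1) ^ (m + 1) - X ^ (m + 1)) : ℂ[X]).degree = (m : WithBot ℕ) := by
  rw [degree_C_mul I_ne_zero]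
  apply degree_eq_of_le_of_coeff_ne_zero
  · rw [degree_le_iff_coeff_zero]
    intro k hk
    have hk : m < k := by exact_mod_cast hk
    rw [coeff_sub, coeff_X_add_one_pow, coeff_X_pow]
    rcases eq_or_ne k (m + 1) with rfl | hne
    · simp
    · rw [Nat.choose_eq_zero_of_lt (by omega)]
      simp [hne]
  · rw [coeff_sub, coeff_X_add_one_pow, coeff_X_pow]
    simpa using Nat.cast_add_one_ne_zero (R := ℂ) m

/-- For every real number `C` there exist integers `n > m ≥ 1`, complex polynomials `p` of
degree `n` and `q` of degree `m`, and a finite set `S` of complex numbers with cardinality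
strictly greater than `C·n` such that every `z ∈ S` satisfies `p(z) + conj(q(z)) = 0`.
Hence there is no bound on the number of zeros of `p(z) + conj(q(z))` linear in `n` with a
growth rate uniform in `m`. -/
theorem no_uniform_linear_bound (C : ℝ) :
    ∃ (n m : ℕ) (p q : Polynomial ℂ) (S : Finset ℂ),
      1 ≤ m ∧ m < n ∧ p.degree = n ∧ q.degree = m ∧
      C * n < (S.card : ℝ) ∧
      ∀ z ∈ S, p.eval z + (starRingEnd ℂ) (q.eval z) = 0 := by
  obtain ⟨N, hN⟩ := exists_nat_gt C
  obtain ⟨m, hm1, hm⟩ : ∃ m : ℕ, 1 ≤ m ∧ C < m := ⟨N + 1, by omega, by push_cast; linarith⟩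
  -- `f (j, l)` lies on the `j`-th line through `0` and on the `l`-th line through `-1`.
  let f : ℕ × ℕ → ℂ := fun x => meet (cotAngle (m + 1) (2 * x.1 + 1)) (cotAngle (m + 1) (2 * x.2 + 2))
  have hne : ∀ j l : ℕ, j < m + 1 → l < m →
      cotAngle (m + 1) (2 * j + 1) ≠ cotAngle (m + 1) (2 * l + 2) := by
    intro j l hj hl h
    have := cotAngle_inj (by omega) (by omega) (by omega) (by omega) h
    omega
  refine ⟨m + 1, m, _, _, (Finset.range (m + 1) ×ˢ Finset.range m).image f, hm1, by omega,
    degree_p m, degree_q m, ?_, ?_⟩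
  · rw [Finset.card_image_of_injOn]
    · rw [Finset.card_product, Finset.card_range, Finset.card_range]
      push_cast
      have : (0 : ℝ) < m + 1 := by positivity
      nlinarith
    · rintro ⟨j, l⟩ hx ⟨j', l'⟩ hx' h
      simp only [Finset.coe_product, Finset.coe_range, Set.mem_prod, Set.mem_Iio] at hx hx'
      obtain ⟨h1, h2⟩ := meet_inj (hne j l hx.1 hx.2) (hne j' l' hx'.1 hx'.2) h
      have e1 := cotAngle_inj (by omega) (by omega) (by omega) (by omega) h1
      have e2 := cotAngle_inj (by omega) (by omega) (by omega) (by omega) h2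
      simp only [Prod.mk.injEq]
      omega
  · intro z hz
    obtain ⟨⟨j, l⟩, hx, rfl⟩ := Finset.mem_image.mp hz
    simp only [Finset.mem_product, Finset.mem_range] at hx
    obtain ⟨a, ha⟩ := exists_cotAngle_pow (n := m + 1) (k := 2 * j + 1) (by omega) (by omega)
    obtain ⟨b, hb⟩ := exists_cotAngle_pow (n := m + 1) (k := 2 * l + 2) (by omega) (by omega)
    have hst := hne j l hx.1 hx.2
    change eval (meet (cotAngle (m + 1) (2 * j + 1)) (cotAngle (m + 1) (2 * l + 2))) _ +
      (starRingEnd ℂ) (eval (meet (cotAngle (m + 1) (2 * j + 1)) (cotAngle (m + 1) (2 * l + 2))) _)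
        = 0
    generalize cotAngle (m + 1) (2 * j + 1) = s at *
    generalize cotAngle (m + 1) (2 * l + 2) = t at *
    -- The factors `(-1) ^ _` come from `I ^ (2 * j + 1)` and `I ^ (2 * l + 2)`.
    refine eval_eq_zero (a := a * (-1) ^ j / (t - s) ^ (m + 1))
      (b := b * (-1) ^ (l + 1) / (t - s) ^ (m + 1)) ?_ ?_
    · rw [meet, div_pow, ha, pow_succ I, pow_mul, I_sq]
      push_cast
      ring
    · rw [meet_add_one hst, div_pow, hb,
        show 2 * l + 2 = 2 * (l + 1) by ring, pow_mul, I_sq]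
      push_cast
      ring
end

section
/- For every integer m > 9 there exists N₀ such that for all integers n ≥ N₀ (with n > m) there exist complex polynomials p of degree n and q of degree m and a finite set S of complex numbers with cardinality strictly greater than 3n − 2 + m(m − 1) such that every z ∈ S satisfies p(z) + conj(q(z)) = 0. (These are counterexamples to Wilmshurst's conjecture that the maximum valence equals 3n − 2 + m(m−1).) -/
/-!
Take `q = (1 - X)^m` and `p = 2ε X^n - q` with `ε > 0` tiny. Then
`p(z) + conj (q(z)) = 2ε z^n - 2i Im q(z)`, so on each of the `2n` rays from `0` on which `z^n` is
purely imaginary the complex equation becomes a single real one, `Im q(z) = ± ε |z|^n`. For small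
`ε` every sign change of `Im q` along such a ray produces a zero. The set `Im q = 0` consists of
`m` lines through `1`, and a ray in the right half plane crosses about `m / 2` of them, so the
number of zeros exceeds `3n` by a positive multiple of `n`.

A point of the upper half plane is described by the angles `θ` at `0` and `ψ` at `1` of its
triangle with vertices `0`, `1` (`trianglePoint`). By the law of sines, on the ray
`θ = (2j+1)π/(2n)` the equation reads
`ε (-1)^j sin(ψ)^n + sin(θ)^m sin(ψ+θ)^(n-m) sin(mψ) = 0` (`eval_trianglePoint`).
At `ψ = (2i+1)π/(2m)` we have `sin(mψ) = (-1)^i`, so the intermediate value theorem gives a zero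
between any two consecutive ones of these angles (`exists_angle`). As `m ≥ 10`, the five angles
`i = 0, …, 4` are less than `π/2`, which yields four zeros on each of the `⌊n/2⌋` rays in the open
first quadrant, and four more on each conjugate ray. These `8⌊n/2⌋` zeros suffice once
`n ≥ m² + 3`.
-/

open Polynomial Complex

/-- The apex of the triangle with base from `0` to `1`, with angle `θ` at `0` and `ψ` at `1`. -/
noncomputable def trianglePoint (θ ψ : ℝ) : ℂ :=
  ((Real.sin ψ / Real.sin (ψ + θ) : ℝ) : ℂ) * (Complex.cos θ + Complex.sin θ * I)

lemma one_sub_trianglePoint {θ ψ : ℝ} (h : Real.sin (ψ + θ) ≠ 0) :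
    1 - trianglePoint θ ψ = ((Real.sin θ / Real.sin (ψ + θ) : ℝ) : ℂ) *
      (Complex.cos ((-ψ : ℝ) : ℂ) + Complex.sin ((-ψ : ℝ) : ℂ) * I) := by
  unfold trianglePoint
  rw [← Complex.ofReal_cos, ← Complex.ofReal_sin, ← Complex.ofReal_cos, ← Complex.ofReal_sin,
    Real.cos_neg, Real.sin_neg]
  apply Complex.ext
  · simp only [Complex.sub_re, Complex.one_re, Complex.re_ofReal_mul, Complex.add_re,
      Complex.ofReal_re, Complex.mul_I_re, Complex.ofReal_im]
    field_simp
    rw [Real.sin_add]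
    ring
  · simp only [Complex.sub_im, Complex.one_im, Complex.im_ofReal_mul, Complex.add_im,
      Complex.ofReal_re, Complex.mul_I_im, Complex.ofReal_im]
    field_simp
    ring

lemma arg_trianglePoint {θ ψ : ℝ} (hθ : 0 < θ) (hψ : 0 < ψ) (h : ψ + θ < Real.pi) :
    Complex.arg (trianglePoint θ ψ) = θ := by
  unfold trianglePoint
  refine Complex.arg_mul_cos_add_sin_mul_I (div_pos ?_ ?_) ⟨by linarith, by linarith⟩
  · exact Real.sin_pos_of_pos_of_lt_pi hψ (by linarith)
  · exact Real.sin_pos_of_pos_of_lt_pi (by linarith) h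

lemma arg_one_sub_trianglePoint {θ ψ : ℝ} (hθ : 0 < θ) (hψ : 0 < ψ) (h : ψ + θ < Real.pi) :
    Complex.arg (1 - trianglePoint θ ψ) = -ψ := by
  have hs := Real.sin_pos_of_pos_of_lt_pi (x := ψ + θ) (by linarith) h
  rw [one_sub_trianglePoint hs.ne']
  refine Complex.arg_mul_cos_add_sin_mul_I (div_pos ?_ hs) ⟨by linarith, by linarith⟩
  exact Real.sin_pos_of_pos_of_lt_pi hθ (by linarith)

lemma trianglePoint_im_pos {θ ψ : ℝ} (hθ : 0 < θ) (hψ : 0 < ψ) (h : ψ + θ < Real.pi) :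
    0 < (trianglePoint θ ψ).im := by
  unfold trianglePoint
  rw [← Complex.ofReal_cos, ← Complex.ofReal_sin]
  simp only [Complex.im_ofReal_mul, Complex.add_im, Complex.mul_I_im, Complex.ofReal_im,
    Complex.ofReal_re, zero_add]
  have h1 := Real.sin_pos_of_pos_of_lt_pi (x := ψ + θ) (by linarith) h
  have h2 := Real.sin_pos_of_pos_of_lt_pi hψ (by linarith)
  have h3 := Real.sin_pos_of_pos_of_lt_pi hθ (by linarith)
  positivity

lemma sin_half_odd (i : ℕ) : Real.sin ((2 * i + 1) * Real.pi / 2) = (-1) ^ i := by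
  rw [show (2 * (i : ℝ) + 1) * Real.pi / 2 = Real.pi / 2 + i * Real.pi by ring,
    Real.sin_add_nat_mul_pi, Real.sin_pi_div_two, mul_one]

lemma cos_half_odd (i : ℕ) : Real.cos ((2 * i + 1) * Real.pi / 2) = 0 := by
  rw [show (2 * (i : ℝ) + 1) * Real.pi / 2 = Real.pi / 2 + i * Real.pi by ring,
    Real.cos_add_nat_mul_pi, Real.cos_pi_div_two, mul_zero]

/-- On a ray on which `z ^ n` is imaginary, a zero of the real function of the angle `ψ` obtained
from the law of sines is a zero of the harmonic polynomial. -/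
lemma eval_trianglePoint {m n j : ℕ} (hmn : m < n) {ε θ ψ : ℝ}
    (hθ : n * θ = (2 * j + 1) * Real.pi / 2) (hs : Real.sin (ψ + θ) ≠ 0)
    (h : ε * (-1) ^ j * Real.sin ψ ^ n +
      Real.sin θ ^ m * Real.sin (ψ + θ) ^ (n - m) * Real.sin (m * ψ) = 0) :
    2 * (ε : ℂ) * trianglePoint θ ψ ^ n - (1 - trianglePoint θ ψ) ^ m +
      (starRingEnd ℂ) ((1 - trianglePoint θ ψ) ^ m) = 0 := by
  have key : ε * (-1) ^ j * (Real.sin ψ / Real.sin (ψ + θ)) ^ n +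
      (Real.sin θ / Real.sin (ψ + θ)) ^ m * Real.sin (m * ψ) = 0 := by
    obtain ⟨d, rfl⟩ := Nat.exists_eq_add_of_lt hmn
    rw [show m + d + 1 - m = d + 1 by omega] at h
    rw [show ε * (-1) ^ j * (Real.sin ψ / Real.sin (ψ + θ)) ^ (m + d + 1) +
      (Real.sin θ / Real.sin (ψ + θ)) ^ m * Real.sin (m * ψ) =
      (ε * (-1) ^ j * Real.sin ψ ^ (m + d + 1) +
      Real.sin θ ^ m * Real.sin (ψ + θ) ^ (d + 1) * Real.sin (m * ψ)) /
        Real.sin (ψ + θ) ^ (m + d + 1) by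
        rw [div_pow, div_pow]; field_simp; ring, h, zero_div]
  have hz : trianglePoint θ ψ ^ n =
      (((Real.sin ψ / Real.sin (ψ + θ)) ^ n * (-1) ^ j : ℝ) : ℂ) * I := by
    unfold trianglePoint
    rw [mul_pow, Complex.cos_add_sin_mul_I_pow, ← Complex.ofReal_natCast, ← Complex.ofReal_mul,
      ← Complex.ofReal_cos, ← Complex.ofReal_sin, hθ, cos_half_odd, sin_half_odd]
    push_cast
    ring
  have hq : (1 - trianglePoint θ ψ) ^ m =
      (((Real.sin θ / Real.sin (ψ + θ)) ^ m : ℝ) : ℂ) *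
        (((Real.cos (m * ψ) : ℝ) : ℂ) - ((Real.sin (m * ψ) : ℝ) : ℂ) * I) := by
    rw [one_sub_trianglePoint hs, mul_pow, Complex.cos_add_sin_mul_I_pow,
      ← Complex.ofReal_natCast, ← Complex.ofReal_mul, ← Complex.ofReal_cos, ← Complex.ofReal_sin,
      mul_neg, Real.cos_neg, Real.sin_neg]
    push_cast
    ring
  rw [hq, hz]
  have key' := congrArg (fun x : ℝ => (x : ℂ)) key
  simp only [Complex.ofReal_add, Complex.ofReal_mul, Complex.ofReal_zero] at key'
  simp only [map_mul, map_sub, Complex.conj_ofReal, Complex.conj_I, Complex.ofReal_mul]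
  linear_combination 2 * I * key'

/-- Between consecutive angles where `sin (m ψ) = ± 1` the real function changes sign, as long as
`ε` is small enough for its second term to dominate at both of them. -/
lemma exists_angle {m n i j : ℕ} (hm : 0 < m) {ε θ : ℝ} (hε : 0 < ε)
    (h : ∀ k ≤ i + 1,
      ε < Real.sin θ ^ m * Real.sin ((2 * k + 1) * Real.pi / 2 / m + θ) ^ (n - m)) :
    ∃ ψ : ℝ, (2 * (i : ℝ) + 1) * Real.pi / 2 / m < ψ ∧
      ψ < (2 * ((i + 1 : ℕ) : ℝ) + 1) * Real.pi / 2 / m ∧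
      ε * (-1) ^ j * Real.sin ψ ^ n +
        Real.sin θ ^ m * Real.sin (ψ + θ) ^ (n - m) * Real.sin (m * ψ) = 0 := by
  have hm' : (0 : ℝ) < m := by exact_mod_cast hm
  have hpm : ∀ k : ℕ, ((-1 : ℝ) ^ k = 1 ∨ (-1 : ℝ) ^ k = -1) := neg_one_pow_eq_or ℝ
  have hbound : ∀ ψ : ℝ, |ε * (-1) ^ j * Real.sin ψ ^ n| ≤ ε := by
    intro ψ
    rw [abs_mul, abs_mul, abs_pow, abs_pow, abs_neg, abs_one, one_pow, mul_one, abs_of_pos hε]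
    exact mul_le_of_le_one_right hε.le (pow_le_one₀ (abs_nonneg _) (Real.abs_sin_le_one ψ))
  have hsin : ∀ k : ℕ, Real.sin (m * ((2 * (k : ℝ) + 1) * Real.pi / 2 / m)) = (-1) ^ k := by
    intro k
    rw [mul_div_cancel₀ _ hm'.ne', sin_half_odd]
  let G : ℝ → ℝ := fun ψ => (-1) ^ i * (ε * (-1) ^ j * Real.sin ψ ^ n +
        Real.sin θ ^ m * Real.sin (ψ + θ) ^ (n - m) * Real.sin (m * ψ))
  have hG : Continuous G := by fun_prop
  have hab : (2 * (i : ℝ) + 1) * Real.pi / 2 / m ≤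
      (2 * ((i + 1 : ℕ) : ℝ) + 1) * Real.pi / 2 / m := by
    push_cast
    gcongr
    linarith
  have ha : 0 < G ((2 * (i : ℝ) + 1) * Real.pi / 2 / m) := by
    have h1 := abs_le.1 (hbound ((2 * (i : ℝ) + 1) * Real.pi / 2 / m))
    have h2 := h i (by omega)
    simp only [G, hsin]
    rcases hpm i with h3 | h3 <;> rw [h3] <;> linarith
  have hb : G ((2 * ((i + 1 : ℕ) : ℝ) + 1) * Real.pi / 2 / m) < 0 := by
    have h1 := abs_le.1 (hbound ((2 * ((i + 1 : ℕ) : ℝ) + 1) * Real.pi / 2 / m))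
    have h2 := h (i + 1) le_rfl
    simp only [G, hsin]
    rw [pow_succ]
    rcases hpm i with h3 | h3 <;> rw [h3] <;> linarith
  obtain ⟨ψ, hψ, h0⟩ := intermediate_value_Ioo' hab hG.continuousOn ⟨hb, ha⟩
  refine ⟨ψ, hψ.1, hψ.2, ?_⟩
  exact (mul_eq_zero.1 h0).resolve_left (pow_ne_zero _ (by norm_num))

/-- For every integer `m > 9` there exists `N₀` such that for all integers `n ≥ N₀` with
`n > m` there exist complex polynomials `p` of degree `n` and `q` of degree `m` and a finite
set `S` of complex numbers with cardinality strictly greater than `3n − 2 + m(m−1)` such that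
every `z ∈ S` satisfies `p(z) + conj(q(z)) = 0` (counterexamples to Wilmshurst's conjecture). -/
theorem wilmshurst_counterexamples (m : ℕ) (hm : 9 < m) :
    ∃ N₀ : ℕ, ∀ n : ℕ, N₀ ≤ n → m < n →
      ∃ (p q : Polynomial ℂ) (S : Finset ℂ),
        p.degree = n ∧ q.degree = m ∧
        3 * (n : ℤ) - 2 + m * (m - 1) < (S.card : ℤ) ∧
        ∀ z ∈ S, p.eval z + (starRingEnd ℂ) (q.eval z) = 0 := by
  refine ⟨m ^ 2 + 3, fun n hn hmn => ?_⟩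
  have hπ := Real.pi_pos
  have hm0 : (0 : ℝ) < m := by exact_mod_cast (by omega : 0 < m)
  have hn0 : (0 : ℝ) < n := by exact_mod_cast (by omega : 0 < n)
  let θ : ℕ → ℝ := fun j => (2 * j + 1) * Real.pi / 2 / n
  have hθn : ∀ j, n * θ j = (2 * j + 1) * Real.pi / 2 := fun j => mul_div_cancel₀ _ hn0.ne'
  have hθ0 : ∀ j, 0 < θ j := fun j => by positivity
  have hθ1 : ∀ j < n / 2, θ j < Real.pi / 2 := by
    intro j hj
    have : (2 * (j : ℝ) + 1) < n := by exact_mod_cast (by omega : 2 * j + 1 < n)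
    simp only [θ]
    rw [div_lt_iff₀ hn0]
    nlinarith
  have hψ1 : ∀ k ≤ 4, (2 * ((k : ℕ) : ℝ) + 1) * Real.pi / 2 / m < Real.pi / 2 := by
    intro k hk
    have : (2 * (k : ℝ) + 1) < m := by exact_mod_cast (by omega : 2 * k + 1 < m)
    rw [div_lt_iff₀ hm0]
    nlinarith
  have hsmall : ∃ ε : ℝ, 0 < ε ∧ ∀ j ∈ Finset.range (n / 2), ∀ k ∈ Finset.range 5,
      ε < Real.sin (θ j) ^ m *
        Real.sin ((2 * (k : ℝ) + 1) * Real.pi / 2 / m + θ j) ^ (n - m) := by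
    have hev : ∀ᶠ ε : ℝ in nhdsWithin 0 (Set.Ioi 0), 0 < ε ∧ ∀ j ∈ Finset.range (n / 2),
        ∀ k ∈ Finset.range 5, ε < Real.sin (θ j) ^ m *
          Real.sin ((2 * (k : ℝ) + 1) * Real.pi / 2 / m + θ j) ^ (n - m) := by
      refine (eventually_mem_nhdsWithin).and ?_
      rw [Filter.eventually_all_finset]
      intro j hj
      rw [Filter.eventually_all_finset]
      intro k hk
      have h1 := hθ1 j (Finset.mem_range.1 hj)
      have h2 := hψ1 k (by have := Finset.mem_range.1 hk; omega)
      have h3 : 0 < (2 * (k : ℝ) + 1) * Real.pi / 2 / m := by positivity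
      have h4 := hθ0 j
      have h5 := Real.sin_pos_of_pos_of_lt_pi h4 (by linarith)
      have h6 := Real.sin_pos_of_pos_of_lt_pi (add_pos h3 h4) (by linarith)
      exact nhdsWithin_le_nhds (gt_mem_nhds (by positivity))
    exact hev.exists
  obtain ⟨ε, hε, hεlt⟩ := hsmall
  have hex : ∀ x : ℕ × ℕ, ∃ ψ : ℝ, x.1 < n / 2 → x.2 < 4 →
      (2 * (x.2 : ℝ) + 1) * Real.pi / 2 / m < ψ ∧
      ψ < (2 * ((x.2 + 1 : ℕ) : ℝ) + 1) * Real.pi / 2 / m ∧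
      ε * (-1) ^ x.1 * Real.sin ψ ^ n +
        Real.sin (θ x.1) ^ m * Real.sin (ψ + θ x.1) ^ (n - m) * Real.sin (m * ψ) = 0 := by
    rintro ⟨j, i⟩
    by_cases hj : j < n / 2
    · by_cases hi : i < 4
      · obtain ⟨ψ, h⟩ := exists_angle (m := m) (n := n) (i := i) (j := j) (θ := θ j)
          (by omega) hε (fun k hk => hεlt j (Finset.mem_range.2 hj) k
            (Finset.mem_range.2 (by omega)))
        exact ⟨ψ, fun _ _ => h⟩
      · exact ⟨0, fun _ h => absurd h hi⟩
    · exact ⟨0, fun h => absurd h hj⟩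
  choose ψ hψ using hex
  let T := Finset.range (n / 2) ×ˢ Finset.range 4
  let f : ℕ × ℕ → ℂ := fun x => trianglePoint (θ x.1) (ψ x)
  have hT : ∀ x ∈ T, x.1 < n / 2 ∧ x.2 < 4 := by
    intro x hx
    simpa [T] using hx
  have hang : ∀ x ∈ T, 0 < ψ x ∧ ψ x + θ x.1 < Real.pi := by
    intro x hx
    obtain ⟨h1, h2⟩ := hT x hx
    obtain ⟨h3, h4, -⟩ := hψ x h1 h2
    have h5 : 0 < (2 * (x.2 : ℝ) + 1) * Real.pi / 2 / m := by positivity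
    have h6 := hψ1 (x.2 + 1) (by omega)
    have h7 := hθ1 x.1 h1
    exact ⟨by linarith, by linarith⟩
  -- A point determines its angles at `0` and `1`; the former gives `j`, and the latter lies in the
  -- `i`-th of a family of disjoint intervals.
  have hinj : Set.InjOn f T := by
    intro x hx y hy hxy
    have hx' := hang x hx
    have hy' := hang y hy
    have e1 : θ x.1 = θ y.1 := by
      rw [← arg_trianglePoint (hθ0 x.1) hx'.1 hx'.2, ← arg_trianglePoint (hθ0 y.1) hy'.1 hy'.2]
      exact congrArg Complex.arg hxy
    have e2 : -ψ x = -ψ y := by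
      rw [← arg_one_sub_trianglePoint (hθ0 x.1) hx'.1 hx'.2,
        ← arg_one_sub_trianglePoint (hθ0 y.1) hy'.1 hy'.2]
      exact congrArg (fun z => Complex.arg (1 - z)) hxy
    have e2' : ψ x = ψ y := neg_injective e2
    have hord : ∀ a b : ℕ, (2 * (a : ℝ) + 1) * Real.pi / 2 / m <
        (2 * ((b + 1 : ℕ) : ℝ) + 1) * Real.pi / 2 / m → a ≤ b := by
      intro a b hlt
      rw [div_lt_div_iff_of_pos_right hm0, div_lt_div_iff_of_pos_right two_pos,
        mul_lt_mul_iff_left₀ hπ] at hlt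
      have : a < b + 1 := by
        have : (a : ℝ) < ((b + 1 : ℕ) : ℝ) := by linarith
        exact_mod_cast this
      omega
    obtain ⟨hx1, hx2, -⟩ := hψ x (hT x hx).1 (hT x hx).2
    obtain ⟨hy1, hy2, -⟩ := hψ y (hT y hy).1 (hT y hy).2
    have e3 : x.2 = y.2 :=
      le_antisymm (hord _ _ (by linarith)) (hord _ _ (by linarith))
    have e4 : x.1 = y.1 := by
      have h1 := hθn x.1
      rw [e1, hθn y.1] at h1
      have : (y.1 : ℝ) = x.1 := by
        have := mul_right_cancel₀ hπ.ne' ((div_left_inj' two_ne_zero).1 h1)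
        linarith
      exact_mod_cast this.symm
    exact Prod.ext e4 e3
  have him : ∀ z ∈ T.image f, 0 < z.im := by
    intro z hz
    obtain ⟨x, hx, rfl⟩ := Finset.mem_image.1 hz
    exact trianglePoint_im_pos (hθ0 x.1) (hang x hx).1 (hang x hx).2
  have hzero : ∀ z ∈ T.image f,
      2 * (ε : ℂ) * z ^ n - (1 - z) ^ m + (starRingEnd ℂ) ((1 - z) ^ m) = 0 := by
    intro z hz
    obtain ⟨x, hx, rfl⟩ := Finset.mem_image.1 hz
    refine eval_trianglePoint hmn (hθn x.1) ?_ (hψ x (hT x hx).1 (hT x hx).2).2.2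
    exact (Real.sin_pos_of_pos_of_lt_pi (add_pos (hang x hx).1 (hθ0 x.1)) (hang x hx).2).ne'
  have hqdeg : ((1 - X : Polynomial ℂ) ^ m).degree = m := by
    have h1 : (1 - X : Polynomial ℂ).degree = 1 := by
      rw [← neg_sub, degree_neg, ← C_1, degree_X_sub_C]
    rw [degree_pow, h1, nsmul_one]
  have hlead : (C (2 * (ε : ℂ)) * X ^ n : Polynomial ℂ).degree = n := by
    refine degree_C_mul_X_pow n ?_
    exact mul_ne_zero two_ne_zero (Complex.ofReal_ne_zero.2 hε.ne')
  refine ⟨C (2 * (ε : ℂ)) * X ^ n - (1 - X) ^ m, (1 - X) ^ m,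
    T.image f ∪ (T.image f).image (starRingEnd ℂ), ?_, hqdeg, ?_, ?_⟩
  · rw [degree_sub_eq_left_of_degree_lt, hlead]
    rw [hlead, hqdeg]
    exact_mod_cast hmn
  · have hcard : (T.image f ∪ (T.image f).image (starRingEnd ℂ)).card = 8 * (n / 2) := by
      rw [Finset.card_union_of_disjoint,
        Finset.card_image_of_injective _ (starRingEnd ℂ).injective,
        Finset.card_image_of_injOn hinj]
      · simp only [T, Finset.card_product, Finset.card_range]
        ring
      · rw [Finset.disjoint_left]
        intro z hz hz'
        obtain ⟨w, hw, rfl⟩ := Finset.mem_image.1 hz'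
        have h1 := him _ hz
        have h2 := him _ hw
        rw [Complex.conj_im] at h1
        linarith
    rw [hcard]
    have h1 : ((m : ℤ) ^ 2 + 3) ≤ n := by exact_mod_cast hn
    have h2 : (n : ℤ) ≤ 2 * ((n / 2 : ℕ) : ℤ) + 1 := by omega
    have h3 : (9 : ℤ) < m := by exact_mod_cast hm
    push_cast at h2 ⊢
    nlinarith
  · intro z hz
    simp only [eval_sub, eval_mul, eval_C, eval_pow, eval_X, eval_one]
    rcases Finset.mem_union.1 hz with hz | hz
    · exact hzero z hz
    · obtain ⟨w, hw, rfl⟩ := Finset.mem_image.1 hz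
      have h := congrArg (starRingEnd ℂ) (hzero w hw)
      simpa [show (starRingEnd ℂ) 2 = 2 from map_ofNat _ 2] using h
end

section
/- (Edelman–Kostlan) Let m ≥ 1 and let μ_m be the product measure on ℝ^{m+1} (coefficient vectors α = (α_0,…,α_m)) whose k-th factor is the real Gaussian measure with mean 0 and variance binom(m,k). For real numbers a < b, the expected number of zeros in the open interval (a,b) of the random polynomial f_α(x) = Σ_{k=0}^m α_k x^k satisfies ∫ (the cardinality of {x ∈ (a,b) : f_α(x) = 0}) dμ_m(α) = (√m/π)·(arctan(b) − arctan(a)). -/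
open MeasureTheory ProbabilityTheory

/-!
For `m = n + 1`, write `f_α(x) = α₀ - g(e, x)`, where `e = (α₁, …, α_m)` and
`g(e, x) = -∑_{k ≥ 1} α_k x^k`. The zeros of `f_α` in `(a, b)` are the points of the fibre of
`g(e, ·)` over `α₀`, and `α₀` is a standard Gaussian independent of `e`. The one-dimensional area
formula, applied for each `e` and integrated over `e` (`area_formula`), gives the Kac–Rice formula
`E N = ∫_a^b E[|∂ₓg(e, x)| φ(g(e, x))] dx`, with `φ` the standard Gaussian density.

Joint measurability of the counting function is part of `area_formula`: the open set of pairs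
`(e, x)` with `∂ₓg(e, x) ≠ 0` is cut into countably many Borel pieces on which
`(e, x) ↦ (g(e, x), e)` is injective, so that by Lusin–Souslin the count is a countable sum of
indicators of Borel sets, away from the critical values, which form a null set by Sard's theorem.

For fixed `x`, the pair `(U, V) = (g, ∂ₓg)` is centered Gaussian. With `A, B, C` its variances and
covariance, the law of `V` under the measure with density `φ(U)` has characteristic function
`(2π(1 + A))^{-1/2} exp(-σt²/2)`, `σ = C - B²/(1 + A)`. It is thus a multiple of a Gaussian law, and
`E[|V| φ(U)] = √σ / (π √(1 + A))` (`lintegral_abs_mul_gaussianPDF`). By the binomial theorem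
`1 + A = (1 + x²)^m` and `(1 + A) σ = m (1 + x²)^(2m - 2)`, so the density of zeros is
`√m / (π (1 + x²))` (`kostlan_density`), a multiple of the derivative of `arctan`.
-/

/-! ### The area formula with parameters -/

lemma isOpen_forall_ne_zero {E : Type*} [TopologicalSpace E] {h : E × ℝ → ℝ}
    (hh : Continuous h) {K : Set ℝ} (hK : IsCompact K) :
    IsOpen {e : E | ∀ z ∈ K, h (e, z) ≠ 0} := by
  rw [isOpen_iff_eventually]
  intro e he
  refine hK.eventually_forall_of_forall_eventually (P := fun e z => h (e, z) ≠ 0) fun z hz => ?_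
  exact hh.continuousAt.eventually_ne (he z hz)

/-- A consequence of Rolle's theorem. -/
lemma injOn_of_deriv_ne_zero {u u' : ℝ → ℝ} (hu : ∀ x, HasDerivAt u (u' x) x) {p q : ℝ}
    (h0 : ∀ z ∈ Set.Icc p q, u' z ≠ 0) : Set.InjOn u (Set.Icc p q) := by
  have key : ∀ x ∈ Set.Icc p q, ∀ y ∈ Set.Icc p q, u x = u y → ¬ x < y := by
    intro x hx y hy hxy hlt
    obtain ⟨c, hc, hc0⟩ := exists_hasDerivAt_eq_zero hlt
      (fun z _ => (hu z).continuousAt.continuousWithinAt) hxy (fun z _ => hu z)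
    exact h0 c ⟨hx.1.trans hc.1.le, hc.2.le.trans hy.2⟩ hc0
  intro x hx y hy hxy
  exact le_antisymm (not_lt.1 (key y hy x hx hxy.symm)) (not_lt.1 (key x hx y hy hxy))

section
variable {E : Type*} [TopologicalSpace E]

/-- For a rational interval `i = (p, q)`: the pairs `(e, x)` with `x ∈ (a, b) ∩ (p, q)` such that
`dg (e, ·)` has no zero on the closed interval `[p, q]`. When `dg (e, ·)` is the derivative of
`g (e, ·)`, the latter is injective on `[p, q]`. -/
def goodBox (a b : ℝ) (dg : E × ℝ → ℝ) (i : ℚ × ℚ) : Set (E × ℝ) :=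
  {w | w.2 ∈ Set.Ioo a b ∧ w.2 ∈ Set.Ioo (i.1 : ℝ) i.2 ∧
    ∀ z ∈ Set.Icc (i.1 : ℝ) i.2, dg (w.1, z) ≠ 0}

lemma isOpen_goodBox {a b : ℝ} {dg : E × ℝ → ℝ} (hdg : Continuous dg) (i : ℚ × ℚ) :
    IsOpen (goodBox a b dg i) :=
  (isOpen_Ioo.preimage continuous_snd).inter ((isOpen_Ioo.preimage continuous_snd).inter
    ((isOpen_forall_ne_zero hdg isCompact_Icc).preimage continuous_fst))

lemma iUnion_goodBox {a b : ℝ} {dg : E × ℝ → ℝ} (hdg : Continuous dg) :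
    ⋃ i, goodBox a b dg i = {w | w.2 ∈ Set.Ioo a b ∧ dg w ≠ 0} := by
  ext ⟨e, x⟩
  simp only [Set.mem_iUnion, Set.mem_ofPred_eq]
  constructor
  · rintro ⟨i, h1, h2, h3⟩
    exact ⟨h1, h3 x ⟨h2.1.le, h2.2.le⟩⟩
  · rintro ⟨h1, h2⟩
    have : ∀ᶠ z in nhds x, dg (e, z) ≠ 0 :=
      (hdg.comp (Continuous.prodMk_right e)).continuousAt.eventually_ne h2
    obtain ⟨ε, hε, hball⟩ := Metric.eventually_nhds_iff.1 this
    obtain ⟨p, hp1, hp2⟩ := exists_rat_btwn (sub_lt_self x hε)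
    obtain ⟨q, hq1, hq2⟩ := exists_rat_btwn (lt_add_of_pos_right x hε)
    refine ⟨(p, q), h1, ⟨hp2, hq1⟩, fun z hz => hball ?_⟩
    rw [Real.dist_eq, abs_lt]
    constructor <;> linarith [hz.1, hz.2]


/-- The parameters `(y, e)` for which `y` is a critical value of `g (e, ·)`. -/
def criticalSet (g dg : E × ℝ → ℝ) : Set (ℝ × E) :=
  {p | ∃ x : ℝ, g (p.2, x) = p.1 ∧ dg (p.2, x) = 0}

/-- Sard's theorem in dimension one, integrated over the parameter. The critical set is
a countable union of closed sets, hence measurable, which allows the slicewise computation. -/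
lemma measure_criticalSet [MeasurableSpace E] [BorelSpace E] [SecondCountableTopology E]
    {g dg : E × ℝ → ℝ} (hg : Continuous g) (hdg : Continuous dg)
    (hderiv : ∀ e x, HasDerivAt (fun x => g (e, x)) (dg (e, x)) x)
    (P : Measure E) [SFinite P] (ν : Measure ℝ) [SFinite ν] (hν : ν ≪ volume) :
    (ν.prod P) (criticalSet g dg) = 0 := by
  have hmeas : MeasurableSet (criticalSet g dg) := by
    have : criticalSet g dg = ⋃ n : ℕ,
        {p : ℝ × E | ∀ z ∈ Set.Icc (-n : ℝ) n, |g (p.2, z) - p.1| + |dg (p.2, z)| ≠ 0}ᶜ := by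
      ext p
      simp only [criticalSet, Set.mem_ofPred_eq, Set.mem_iUnion, Set.mem_compl_iff, not_forall,
        not_not]
      constructor
      · rintro ⟨x, h1, h2⟩
        obtain ⟨n, hn⟩ := exists_nat_ge |x|
        exact ⟨n, x, abs_le.1 hn, by simp [h1, h2]⟩
      · rintro ⟨n, x, -, h⟩
        have h1 := abs_nonneg (g (p.2, x) - p.1)
        have h2 := abs_nonneg (dg (p.2, x))
        exact ⟨x, sub_eq_zero.1 (abs_eq_zero.1 (by linarith)), abs_eq_zero.1 (by linarith)⟩
    rw [this]
    refine MeasurableSet.iUnion fun n => (IsOpen.measurableSet ?_).compl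
    exact isOpen_forall_ne_zero
      (h := fun w : (ℝ × E) × ℝ => |g (w.1.2, w.2) - w.1.1| + |dg (w.1.2, w.2)|)
      (by fun_prop) isCompact_Icc
  rw [Measure.prod_apply_symm hmeas]
  refine (lintegral_congr fun e => ?_).trans lintegral_zero
  refine hν (measure_mono_null (t := (fun x => g (e, x)) '' {x | dg (e, x) = 0}) ?_ ?_)
  · rintro y ⟨x, h1, h2⟩
    exact ⟨x, h2, h1⟩
  · refine addHaar_image_eq_zero_of_det_fderivWithin_eq_zero volume
      (fun x _ => (hderiv e x).hasFDerivAt.hasFDerivWithinAt) fun x hx => ?_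
    have hx : dg (e, x) = 0 := hx
    simp [hx]

/-- Counting the points of the fibres of `g (e, ·)` in `(a, b)` and integrating against
`ρ(y) dy ⊗ P(de)`. The counting function is only claimed to be a.e. measurable. -/
theorem area_formula [PolishSpace E] [MeasurableSpace E] [BorelSpace E]
    {g dg : E × ℝ → ℝ} (hg : Continuous g) (hdg : Continuous dg)
    (hderiv : ∀ e x, HasDerivAt (fun x => g (e, x)) (dg (e, x)) x)
    (P : Measure E) [SFinite P] {ρ : ℝ → ENNReal} (hρ : Measurable ρ) (a b : ℝ) :
    AEMeasurable (fun p : ℝ × E => Measure.count {x | x ∈ Set.Ioo a b ∧ g (p.2, x) = p.1})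
      ((volume.withDensity ρ).prod P) ∧
    ∫⁻ p : ℝ × E, Measure.count {x | x ∈ Set.Ioo a b ∧ g (p.2, x) = p.1}
        ∂((volume.withDensity ρ).prod P) =
      ∫⁻ x in Set.Ioo a b, ∫⁻ e, ENNReal.ofReal |dg (e, x)| * ρ (g (e, x)) ∂P := by
  set ν := volume.withDensity ρ with hν
  obtain ⟨r, hr⟩ := exists_surjective_nat (ℚ × ℚ)
  set D : ℕ → Set (E × ℝ) := disjointed fun n => goodBox a b dg (r n) with hD
  have hDm : ∀ n, MeasurableSet (D n) :=
    MeasurableSet.disjointed fun n => (isOpen_goodBox hdg (r n)).measurableSet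
  have hDd : Pairwise (Function.onFun Disjoint D) := disjoint_disjointed _
  have hDU : ⋃ n, D n = {w | w.2 ∈ Set.Ioo a b ∧ dg w ≠ 0} := by
    rw [hD, iUnion_disjointed, hr.iUnion_comp, iUnion_goodBox hdg]
  have hDinj : ∀ n e x y, (e, x) ∈ D n → (e, y) ∈ D n → g (e, x) = g (e, y) → x = y := by
    intro n e x y hx hy hxy
    have hx' := disjointed_subset _ n hx
    have hy' := disjointed_subset _ n hy
    exact injOn_of_deriv_ne_zero (hderiv e) hx'.2.2 (Set.Ioo_subset_Icc_self hx'.2.1)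
      (Set.Ioo_subset_Icc_self hy'.2.1) hxy
  -- By Lusin–Souslin, `Φ '' D n` is measurable since `Φ` is continuous and injective on `D n`.
  set Φ : E × ℝ → ℝ × E := fun w => (g w, w.1) with hΦ
  have hΦm : ∀ n, MeasurableSet (Φ '' D n) := by
    intro n
    refine (hDm n).image_of_continuousOn_injOn (by fun_prop) ?_
    rintro ⟨e, x⟩ hx ⟨e', y⟩ hy hxy
    simp only [hΦ, Prod.mk.injEq] at hxy
    obtain ⟨h1, rfl⟩ := hxy
    rw [hDinj n e x y hx hy h1]
  have hSm : ∀ n e, MeasurableSet {x | (e, x) ∈ D n} := fun n e =>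
    (hDm n).preimage measurable_prodMk_left
  have hSd : ∀ e, Pairwise (Function.onFun Disjoint fun n => {x | (e, x) ∈ D n}) :=
    fun e i j hij => (hDd hij).preimage (Prod.mk e)
  have hSU : ∀ e, ⋃ n, {x | (e, x) ∈ D n} = Set.Ioo a b ∩ {x | dg (e, x) ≠ 0} := by
    intro e
    have := congrArg (fun s => Prod.mk e ⁻¹' s) hDU
    rw [Set.preimage_iUnion] at this
    exact this
  have hcount : (fun p : ℝ × E => Measure.count {x | x ∈ Set.Ioo a b ∧ g (p.2, x) = p.1})
      =ᵐ[ν.prod P] fun p => ∑' n, (Φ '' D n).indicator (fun _ => (1 : ENNReal)) p := by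
    have h0 := measure_criticalSet hg hdg hderiv P ν (withDensity_absolutelyContinuous _ _)
    filter_upwards [measure_eq_zero_iff_ae_notMem.1 h0] with ⟨y, e⟩ hp
    have hset : {x | x ∈ Set.Ioo a b ∧ g (e, x) = y} =
        ⋃ n, {x | (e, x) ∈ D n ∧ g (e, x) = y} := by
      have : ⋃ n, {x | (e, x) ∈ D n ∧ g (e, x) = y} =
          (⋃ n, {x | (e, x) ∈ D n}) ∩ {x | g (e, x) = y} := by
        rw [Set.iUnion_inter]; rfl
      rw [this, hSU]
      ext x
      constructor
      · rintro ⟨h1, h2⟩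
        exact ⟨⟨h1, fun h3 => hp ⟨x, h2, h3⟩⟩, h2⟩
      · rintro ⟨⟨h1, -⟩, h2⟩
        exact ⟨h1, h2⟩
    have hsub : ∀ n, {x | (e, x) ∈ D n ∧ g (e, x) = y}.Subsingleton := by
      rintro n x ⟨h1, h2⟩ x' ⟨h3, h4⟩
      exact hDinj n e x x' h1 h3 (h2.trans h4.symm)
    dsimp only
    rw [hset, measure_iUnion (fun i j hij => ((hSd e) hij).mono (fun x h => h.1) fun x h => h.1)
      fun n => (hsub n).measurableSet]
    refine tsum_congr fun n => ?_
    by_cases h : (y, e) ∈ Φ '' D n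
    · rw [Set.indicator_of_mem h]
      obtain ⟨⟨e', x⟩, hx, hxy⟩ := h
      simp only [hΦ, Prod.mk.injEq] at hxy
      obtain ⟨h1, rfl⟩ := hxy
      rw [(hsub n).eq_singleton_of_mem (x := x) ⟨hx, h1⟩, Measure.count_singleton]
    · rw [Set.indicator_of_notMem h]
      have : {x | (e, x) ∈ D n ∧ g (e, x) = y} = ∅ := by
        rw [Set.eq_empty_iff_forall_notMem]
        rintro x ⟨h1, h2⟩
        exact h ⟨(e, x), h1, by simp [hΦ, h2]⟩
      rw [this, measure_empty]
  have hNm : ∀ n, Measurable ((Φ '' D n).indicator fun _ => (1 : ENNReal)) := fun n =>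
    measurable_const.indicator (hΦm n)
  refine ⟨(Measurable.tsum hNm).aemeasurable.congr hcount.symm, ?_⟩
  have hFm : Measurable fun w : E × ℝ => ENNReal.ofReal |dg w| * ρ (g w) := by
    have := hg.measurable
    have := hdg.measurable
    fun_prop
  have hpiece : ∀ n, ∫⁻ p, (Φ '' D n).indicator (fun _ => (1 : ENNReal)) p ∂(ν.prod P) =
      ∫⁻ e, (∫⁻ x in {x | (e, x) ∈ D n}, ENNReal.ofReal |dg (e, x)| * ρ (g (e, x))) ∂P := by
    intro n
    rw [lintegral_indicator (hΦm n), setLIntegral_one, Measure.prod_apply_symm (hΦm n)]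
    refine lintegral_congr fun e => ?_
    rw [← lintegral_image_eq_lintegral_abs_deriv_mul (hSm n e)
      (fun x _ => (hderiv e x).hasDerivWithinAt) (fun x hx y hy h => hDinj n e x y hx hy h),
      hν, withDensity_apply']
    congr 2
    ext y
    constructor
    · rintro ⟨⟨e', x⟩, hx, hxy⟩
      simp only [hΦ, Prod.mk.injEq] at hxy
      obtain ⟨h1, rfl⟩ := hxy
      exact ⟨x, hx, h1⟩
    · rintro ⟨x, hx, hxy⟩
      exact ⟨(e, x), hx, by simp only [hΦ]; rw [← hxy]⟩
  have hSI : ∀ n, Measurable fun e =>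
      ∫⁻ x in {x | (e, x) ∈ D n}, ENNReal.ofReal |dg (e, x)| * ρ (g (e, x)) := by
    intro n
    have h1 : Measurable fun e => ∫⁻ x, (D n).indicator
        (fun w : E × ℝ => ENNReal.ofReal |dg w| * ρ (g w)) (e, x) :=
      (hFm.indicator (hDm n)).lintegral_prod_right'
    convert h1 using 2 with e
    rw [← lintegral_indicator (hSm n e)]
    rfl
  rw [lintegral_congr_ae hcount, lintegral_tsum fun n => (hNm n).aemeasurable,
    tsum_congr hpiece, ← lintegral_tsum fun n => (hSI n).aemeasurable,
    lintegral_lintegral_swap (f := fun x e => ENNReal.ofReal |dg (e, x)| * ρ (g (e, x)))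
      (hFm.comp measurable_swap).aemeasurable]
  refine lintegral_congr fun e => ?_
  rw [← lintegral_iUnion (hSm · e) (hSd e), hSU]
  rw [Set.inter_comm, ← Measure.restrict_restrict₀']
  · refine setLIntegral_eq_of_support_subset fun x hx h0 => hx ?_
    simp [h0]
  · exact measurableSet_Ioo.nullMeasurableSet
end

/-! ### Gaussian integrals -/

lemma charFun_pi_gaussian {ι : Type*} [Fintype ι] (v : ι → NNReal) (w : ι → ℝ) :
    ∫ α : ι → ℝ, Complex.exp (((∑ k, w k * α k : ℝ) : ℂ) * Complex.I)
      ∂(Measure.pi fun k => gaussianReal 0 (v k)) =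
    ((Real.exp (-(∑ k, w k ^ 2 * v k) / 2) : ℝ) : ℂ) := by
  have h1 : ∀ α : ι → ℝ, Complex.exp (((∑ k, w k * α k : ℝ) : ℂ) * Complex.I) =
      ∏ k, Complex.exp (w k * α k * Complex.I) := by
    intro α
    rw [← Complex.exp_sum, Complex.ofReal_sum, Finset.sum_mul]
    simp
  simp_rw [h1]
  rw [integral_fintype_prod_eq_prod (fun k (y : ℝ) => Complex.exp (w k * y * Complex.I))]
  simp_rw [← charFun_apply_real, charFun_gaussianReal, ← Complex.exp_sum]
  rw [Complex.ofReal_exp]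
  congr 1
  push_cast
  rw [← Finset.sum_neg_distrib, Finset.sum_div]
  refine Finset.sum_congr rfl fun k _ => ?_
  ring

lemma integral_exp_quadratic_gaussian {A : ℝ} (hA : 0 ≤ A) (B C t : ℝ) :
    ∫ s, Real.exp (-(A * s ^ 2 + 2 * B * s * t + C * t ^ 2) / 2) ∂(gaussianReal 0 1) =
      (Real.sqrt (1 + A))⁻¹ * Real.exp (-(C - B ^ 2 / (1 + A)) * t ^ 2 / 2) := by
  have hA1 : 0 < 1 + A := by linarith
  rw [integral_gaussianReal_eq_integral_smul one_ne_zero]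
  have h1 : ∀ s : ℝ, gaussianPDFReal 0 1 s •
      Real.exp (-(A * s ^ 2 + 2 * B * s * t + C * t ^ 2) / 2) =
      ((Real.sqrt (2 * Real.pi))⁻¹ * Real.exp (-(C - B ^ 2 / (1 + A)) * t ^ 2 / 2)) *
        Real.exp (-((1 + A) / 2) * (s + B * t / (1 + A)) ^ 2) := by
    intro s
    simp only [gaussianPDFReal, NNReal.coe_one, mul_one, smul_eq_mul, sub_zero]
    rw [mul_assoc (Real.sqrt _)⁻¹, mul_assoc (Real.sqrt _)⁻¹, ← Real.exp_add, ← Real.exp_add]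
    congr 2
    field_simp
    ring
  simp_rw [h1]
  rw [integral_const_mul,
    integral_add_right_eq_self (fun s => Real.exp (-((1 + A) / 2) * s ^ 2)), integral_gaussian]
  have h2 : Real.pi / ((1 + A) / 2) = (2 * Real.pi) * (1 + A)⁻¹ := by field_simp
  rw [h2, Real.sqrt_mul (by positivity) (1 + A)⁻¹, Real.sqrt_inv]
  have : Real.sqrt (2 * Real.pi) ≠ 0 := by positivity
  field_simp

lemma lintegral_abs_gaussian {v : NNReal} (hv : v ≠ 0) :
    ∫⁻ x, ENNReal.ofReal |x| ∂(gaussianReal 0 v) =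
      ENNReal.ofReal (Real.sqrt (2 / Real.pi) * Real.sqrt v) := by
  have hv0 : (0 : ℝ) < v := by positivity
  have hintegrable : Integrable (fun x : ℝ => |x|) (gaussianReal 0 v) :=
    ((memLp_id_gaussianReal (μ := 0) (v := v) 1).integrable (by simp)).abs
  rw [← ofReal_integral_eq_lintegral_ofReal hintegrable (ae_of_all _ fun x => abs_nonneg x)]
  congr 1
  rw [integral_gaussianReal_eq_integral_smul hv]
  have h1 : ∀ x : ℝ, gaussianPDFReal 0 v x • |x| =
      (Real.sqrt (2 * Real.pi * v))⁻¹ *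
        (|x| ^ (1 : ℝ) * Real.exp (-(2 * v : ℝ)⁻¹ * |x| ^ (2 : ℝ))) := by
    intro x
    simp only [gaussianPDFReal, smul_eq_mul, sub_zero, Real.rpow_one, Real.rpow_two, sq_abs]
    rw [mul_assoc, mul_comm |x|]
    congr 3
    field_simp
  simp_rw [h1]
  rw [integral_const_mul,
    integral_comp_abs (f := fun x : ℝ => x ^ (1 : ℝ) * Real.exp (-(2 * v : ℝ)⁻¹ * x ^ (2 : ℝ))),
    integral_rpow_mul_exp_neg_mul_rpow (by norm_num) (by norm_num) (by positivity)]
  have h2 : (-(1 + 1) / 2 : ℝ) = -1 := by norm_num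
  have h3 : ((1 + 1) / 2 : ℝ) = 1 := by norm_num
  rw [h2, h3, Real.Gamma_one, Real.rpow_neg_one, inv_inv, Real.sqrt_div (by norm_num),
    Real.sqrt_mul (by positivity) (v : ℝ), Real.sqrt_mul (by norm_num)]
  have h4 : 0 < Real.sqrt 2 := by positivity
  have h5 : 0 < Real.sqrt Real.pi := by positivity
  have h6 : 0 < Real.sqrt v := by positivity
  have h7 : Real.sqrt 2 ^ 2 = 2 := Real.sq_sqrt (by norm_num)
  have h8 : Real.sqrt v ^ 2 = v := Real.sq_sqrt hv0.le
  field_simp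
  rw [h7, h8]

/-- Computes `E[|V| φ(U)]` for the linear forms `U = ∑ c k α k`, `V = ∑ d k α k` in independent
centered Gaussians, with `A = Var U`, `B = Cov (U, V)`, `C = Var V`. Writing `φ` as a Fourier
transform identifies the `φ(U)`-weighted law of `V` through its characteristic function; this
also covers the degenerate case `A = 0`. -/
theorem lintegral_abs_mul_gaussianPDF {ι : Type*} [Fintype ι] (v : ι → NNReal) (c d : ι → ℝ)
    {A B C : ℝ} (hA : A = ∑ k, c k ^ 2 * v k) (hB : B = ∑ k, c k * d k * v k)
    (hC : C = ∑ k, d k ^ 2 * v k) {σ : NNReal} (hσ : σ ≠ 0)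
    (hσ' : (σ : ℝ) = C - B ^ 2 / (1 + A)) :
    ∫⁻ α : ι → ℝ, ENNReal.ofReal |∑ k, d k * α k| * gaussianPDF 0 1 (∑ k, c k * α k)
      ∂(Measure.pi fun k => gaussianReal 0 (v k)) =
    ENNReal.ofReal (Real.sqrt σ / (Real.pi * Real.sqrt (1 + A))) := by
  have hA0 : 0 ≤ A := hA ▸ Finset.sum_nonneg fun k _ => by positivity
  set P := Measure.pi fun k => gaussianReal 0 (v k) with hP
  set U : (ι → ℝ) → ℝ := fun α => ∑ k, c k * α k with hU
  set V : (ι → ℝ) → ℝ := fun α => ∑ k, d k * α k with hV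
  have hUm : Measurable U := by fun_prop
  have hVm : Measurable V := by fun_prop
  have hpm : Measurable fun α => gaussianPDF 0 1 (U α) := (measurable_gaussianPDF 0 1).comp hUm
  set K : ℝ := (Real.sqrt (2 * Real.pi))⁻¹ * (Real.sqrt (1 + A))⁻¹ with hK
  have hK0 : 0 ≤ K := by positivity
  set ν : Measure ℝ := (P.withDensity fun α => gaussianPDF 0 1 (U α)).map V with hν
  have hpdf : ∀ u : ℝ, ((gaussianPDFReal 0 1 u : ℝ) : ℂ) = ((Real.sqrt (2 * Real.pi))⁻¹ : ℝ) *
      ∫ s, Complex.exp (u * s * Complex.I) ∂(gaussianReal 0 1) := by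
    intro u
    rw [← charFun_apply_real, charFun_gaussianReal]
    simp [gaussianPDFReal, neg_div]
  have hfin : IsFiniteMeasure (P.withDensity fun α => gaussianPDF 0 1 (U α)) := by
    refine isFiniteMeasure_withDensity (ne_of_lt ?_)
    calc ∫⁻ α, gaussianPDF 0 1 (U α) ∂P
        ≤ ∫⁻ α, ENNReal.ofReal (Real.sqrt (2 * Real.pi))⁻¹ ∂P := by
          refine lintegral_mono fun α => ENNReal.ofReal_le_ofReal ?_
          simp only [gaussianPDFReal, NNReal.coe_one, mul_one, sub_zero]
          refine mul_le_of_le_one_right (by positivity) (Real.exp_le_one_iff.2 ?_)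
          have := sq_nonneg (U α)
          linarith
      _ < ⊤ := by
          rw [lintegral_const, measure_univ, mul_one]
          exact ENNReal.ofReal_lt_top
  have hmeas : ν = (ENNReal.ofReal K) • gaussianReal 0 σ := by
    have : IsFiniteMeasure ((ENNReal.ofReal K) • gaussianReal 0 σ) :=
      Measure.smul_finite _ ENNReal.ofReal_ne_top
    refine Measure.ext_of_charFun (funext fun t => ?_)
    have hR : charFun ((ENNReal.ofReal K) • gaussianReal 0 σ) t =
        K * ((Real.exp (-σ * t ^ 2 / 2) : ℝ) : ℂ) := by
      rw [charFun_apply_real, integral_smul_measure, ← charFun_apply_real, charFun_gaussianReal,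
        ENNReal.toReal_ofReal hK0]
      simp [neg_div]
    rw [hR, charFun_apply_real, hν, integral_map hVm.aemeasurable (by fun_prop),
      integral_withDensity_eq_integral_toReal_smul hpm (ae_of_all _ fun _ => gaussianPDF_lt_top)]
    have h1 : ∀ α, (gaussianPDF 0 1 (U α)).toReal • Complex.exp (t * V α * Complex.I) =
        ((Real.sqrt (2 * Real.pi))⁻¹ : ℝ) * ∫ s, Complex.exp
          (((∑ k, (s * c k + t * d k) * α k : ℝ) : ℂ) * Complex.I) ∂(gaussianReal 0 1) := by
      intro α
      rw [toReal_gaussianPDF, Complex.real_smul, hpdf, mul_assoc, ← integral_mul_const]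
      congr 2
      ext s
      rw [← Complex.exp_add]
      congr 1
      have : ∑ k, (s * c k + t * d k) * α k = U α * s + t * V α := by
        simp only [hU, hV, Finset.mul_sum, Finset.sum_mul, ← Finset.sum_add_distrib]
        exact Finset.sum_congr rfl fun k _ => by ring
      rw [this]
      push_cast
      ring
    simp_rw [h1]
    rw [integral_const_mul, integral_integral_swap]
    · simp_rw [hP, charFun_pi_gaussian]
      rw [integral_complex_ofReal]
      have h2 : ∀ s : ℝ, ∑ k, (s * c k + t * d k) ^ 2 * (v k : ℝ) =
          A * s ^ 2 + 2 * B * s * t + C * t ^ 2 := by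
        intro s
        simp only [hA, hB, hC, Finset.mul_sum, Finset.sum_mul, ← Finset.sum_add_distrib]
        exact Finset.sum_congr rfl fun k _ => by ring
      simp_rw [h2]
      rw [integral_exp_quadratic_gaussian hA0, ← hσ', hK]
      push_cast
      ring
    · refine Integrable.of_bound (C := 1) ?_ (ae_of_all _ fun p => ?_)
      · refine Continuous.aestronglyMeasurable ?_
        simp only [Function.uncurry_def]
        fun_prop
      · simp only [Function.uncurry_def]
        rw [Complex.norm_exp_ofReal_mul_I]
  calc ∫⁻ α, ENNReal.ofReal |V α| * gaussianPDF 0 1 (U α) ∂P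
      = ∫⁻ α, ENNReal.ofReal |V α| ∂(P.withDensity fun α => gaussianPDF 0 1 (U α)) := by
        rw [lintegral_withDensity_eq_lintegral_mul _ hpm (by fun_prop)]
        simp [mul_comm]
    _ = ∫⁻ x, ENNReal.ofReal |x| ∂ν := by
        rw [hν, lintegral_map (by fun_prop) hVm]
    _ = _ := by
        rw [hmeas, lintegral_smul_measure, lintegral_abs_gaussian hσ, smul_eq_mul,
          ← ENNReal.ofReal_mul hK0, hK, Real.sqrt_div (by norm_num), Real.sqrt_mul (by norm_num)]
        congr 1
        have h2 : Real.sqrt 2 ≠ 0 := by positivity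
        have h3 : Real.sqrt Real.pi ^ 2 = Real.pi := Real.sq_sqrt Real.pi_pos.le
        have h4 : 0 < Real.sqrt (1 + A) := by positivity
        have h5 : 0 < Real.sqrt Real.pi := by positivity
        field_simp
        rw [h3]

/-! ### The density of zeros -/

lemma sum_choose_pow (n : ℕ) (y : ℝ) :
    ∑ k : Fin (n + 1), y ^ (k : ℕ) * (n.choose k : ℝ) = (1 + y) ^ n := by
  rw [Fin.sum_univ_eq_sum_range (fun k => y ^ k * (n.choose k : ℝ)), add_comm 1 y, add_pow]
  simp

lemma succ_mul_choose_real (n k : ℕ) :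
    ((k : ℝ) + 1) * ((n + 1).choose (k + 1) : ℝ) = (n + 1) * (n.choose k : ℝ) := by
  have := Nat.add_one_mul_choose_eq n k
  rw [mul_comm]
  exact_mod_cast this.symm

/-- The factor `1 + y` on the left avoids the exponent `n - 1`. -/
lemma sum_mul_choose_pow (n : ℕ) (y : ℝ) :
    (∑ k : Fin (n + 1), (k : ℝ) * (y ^ (k : ℕ) * (n.choose k : ℝ))) * (1 + y) =
      n * y * (1 + y) ^ n := by
  cases n with
  | zero => simp
  | succ n =>
    rw [Fin.sum_univ_succ]
    have : ∀ k : Fin (n + 1), ((k.succ : Fin (n + 2)) : ℝ) *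
        (y ^ ((k.succ : Fin (n + 2)) : ℕ) * ((n + 1).choose (k.succ : Fin (n + 2)) : ℝ)) =
        ((n + 1) * y) * (y ^ (k : ℕ) * (n.choose k : ℝ)) := by
      intro k
      have := succ_mul_choose_real n k
      simp only [Fin.val_succ]
      push_cast
      linear_combination y ^ ((k : ℕ) + 1) * this
    simp_rw [this, ← Finset.mul_sum, sum_choose_pow]
    simp
    ring

/-- The density at `x` of the expected number of zeros, for degree `n + 1`. -/
lemma kostlan_density (n : ℕ) (x : ℝ) :
    ∫⁻ α : Fin (n + 1) → ℝ, ENNReal.ofReal |∑ k : Fin (n + 1), -((k + 1) * x ^ (k : ℕ)) * α k| *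
        gaussianPDF 0 1 (∑ k : Fin (n + 1), -x ^ ((k : ℕ) + 1) * α k)
      ∂(Measure.pi fun k : Fin (n + 1) => gaussianReal 0 ((n + 1).choose ((k : ℕ) + 1))) =
    ENNReal.ofReal (Real.sqrt (n + 1) / Real.pi * (1 + x ^ 2)⁻¹) := by
  have hy : 0 < 1 + x ^ 2 := by positivity
  set y := x ^ 2 with hyx
  have hA : (1 + y) ^ (n + 1) - 1 = ∑ k : Fin (n + 1),
      (-x ^ ((k : ℕ) + 1)) ^ 2 * (((n + 1).choose ((k : ℕ) + 1) : NNReal) : ℝ) := by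
    rw [← sum_choose_pow, Fin.sum_univ_succ]
    simp only [Fin.val_zero, pow_zero, Nat.choose_zero_right, Nat.cast_one, mul_one,
      add_sub_cancel_left, Fin.val_succ, NNReal.coe_natCast]
    refine Finset.sum_congr rfl fun k _ => ?_
    rw [hyx]; ring
  have hB : (n + 1) * x * (1 + y) ^ n = ∑ k : Fin (n + 1),
      (-x ^ ((k : ℕ) + 1)) * (-((k + 1) * x ^ (k : ℕ))) *
        (((n + 1).choose ((k : ℕ) + 1) : NNReal) : ℝ) := by
    rw [← sum_choose_pow, Finset.mul_sum]
    refine Finset.sum_congr rfl fun k _ => ?_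
    have := succ_mul_choose_real n k
    rw [hyx, NNReal.coe_natCast]
    linear_combination -(x ^ (2 * (k : ℕ) + 1)) * this
  have hC : ((n : ℝ) + 1) * ((1 + y) ^ n + n * y * (1 + y) ^ n / (1 + y)) = ∑ k : Fin (n + 1),
      (-((k + 1) * x ^ (k : ℕ))) ^ 2 * (((n + 1).choose ((k : ℕ) + 1) : NNReal) : ℝ) := by
    rw [← sum_mul_choose_pow, mul_div_cancel_right₀ _ hy.ne', ← sum_choose_pow,
      ← Finset.sum_add_distrib, Finset.mul_sum]
    refine Finset.sum_congr rfl fun k _ => ?_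
    have := succ_mul_choose_real n k
    rw [hyx, NNReal.coe_natCast]
    linear_combination -((k + 1) * x ^ (2 * (k : ℕ))) * this
  set σ : ℝ := ((n : ℝ) + 1) * (1 + y) ^ (2 * n) / (1 + y) ^ (n + 1) with hσ
  have hσ0 : 0 < σ := by positivity
  rw [lintegral_abs_mul_gaussianPDF _ _ _ hA hB hC (σ := ⟨σ, hσ0.le⟩)
    (fun h => hσ0.ne' (congrArg NNReal.toReal h)) ?_]
  · congr 1
    have h1 : Real.sqrt (1 + ((1 + y) ^ (n + 1) - 1)) = Real.sqrt ((1 + y) ^ (n + 1)) := by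
      congr 1; ring
    have h2 : Real.sqrt σ = Real.sqrt (n + 1) * (1 + y) ^ n / Real.sqrt ((1 + y) ^ (n + 1)) := by
      rw [hσ, Real.sqrt_div (by positivity), Real.sqrt_mul (by positivity), mul_comm 2 n, pow_mul,
        Real.sqrt_sq (by positivity)]
    have h3 : Real.sqrt ((1 + y) ^ (n + 1)) ^ 2 = (1 + y) ^ (n + 1) :=
      Real.sq_sqrt (by positivity)
    have h4 : 0 < Real.sqrt ((1 + y) ^ (n + 1)) := by positivity
    change Real.sqrt σ / _ = _
    rw [h1, h2]
    have := Real.pi_pos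
    field_simp
    rw [h3]
    ring
  · change σ = _
    rw [hσ]
    have h1 : 1 + ((1 + y) ^ (n + 1) - 1) = (1 + y) ^ (n + 1) := by ring
    rw [h1]
    field_simp
    rw [← hyx]
    ring

/-- (Edelman–Kostlan) The expected number of zeros in `(a,b)` of a degree-`m` real Kostlan
random polynomial `f_α(x) = Σ_{k=0}^m α_k x^k`, whose coefficients `α_k` are independent
centered Gaussians with variance `binom(m,k)`, equals `(√m/π)·(arctan b − arctan a)`. -/
theorem edelman_kostlan (m : ℕ) (hm : 1 ≤ m) (a b : ℝ) (hab : a < b) :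
    ∫ α : Fin (m + 1) → ℝ,
        (({x : ℝ | x ∈ Set.Ioo a b ∧ ∑ k : Fin (m + 1), α k * x ^ (k : ℕ) = 0}.ncard : ℝ))
      ∂(Measure.pi fun k : Fin (m + 1) => gaussianReal 0 (m.choose k)) =
    Real.sqrt m / Real.pi * (Real.arctan b - Real.arctan a) := by
  obtain ⟨n, rfl⟩ : ∃ n, m = n + 1 := ⟨m - 1, by omega⟩
  set P : Measure (Fin (n + 1) → ℝ) :=
    Measure.pi fun k : Fin (n + 1) => gaussianReal 0 ((n + 1).choose ((k : ℕ) + 1)) with hP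
  set g : (Fin (n + 1) → ℝ) × ℝ → ℝ :=
    fun w => ∑ k : Fin (n + 1), -w.2 ^ ((k : ℕ) + 1) * w.1 k with hg
  set dg : (Fin (n + 1) → ℝ) × ℝ → ℝ :=
    fun w => ∑ k : Fin (n + 1), -((k + 1) * w.2 ^ (k : ℕ)) * w.1 k with hdg
  have hderiv : ∀ e x, HasDerivAt (fun x => g (e, x)) (dg (e, x)) x := by
    intro e x
    refine HasDerivAt.fun_sum fun k _ => ?_
    have := ((hasDerivAt_pow ((k : ℕ) + 1) x).neg).mul_const (e k)
    simpa using this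
  obtain ⟨hmeas, hkacrice⟩ := area_formula (g := g) (dg := dg) (by fun_prop) (by fun_prop) hderiv P
    (measurable_gaussianPDF 0 1) a b
  rw [← gaussianReal_of_var_ne_zero 0 one_ne_zero] at hmeas hkacrice
  have hval : ∫⁻ p : ℝ × (Fin (n + 1) → ℝ),
      Measure.count {x | x ∈ Set.Ioo a b ∧ g (p.2, x) = p.1} ∂((gaussianReal 0 1).prod P) =
      ENNReal.ofReal (Real.sqrt (n + 1) / Real.pi * (Real.arctan b - Real.arctan a)) := by
    rw [hkacrice]
    simp only [hg, hdg, hP, kostlan_density]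
    rw [← ofReal_integral_eq_lintegral_ofReal, integral_const_mul, ← integral_Ioc_eq_integral_Ioo,
      ← intervalIntegral.integral_of_le hab.le, integral_inv_one_add_sq]
    · exact (integrable_inv_one_add_sq.const_mul _).restrict
    · exact ae_of_all _ fun x => by positivity
  have hsplit := measurePreserving_piFinSuccAbove
    (fun k : Fin (n + 1 + 1) => gaussianReal 0 ((n + 1).choose k)) 0
  simp only [Fin.zero_succAbove, Fin.val_zero, Nat.choose_zero_right, Nat.cast_one,
    Fin.val_succ] at hsplit
  have hncard : ∀ α : Fin (n + 1 + 1) → ℝ,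
      ({x : ℝ | x ∈ Set.Ioo a b ∧ ∑ k, α k * x ^ (k : ℕ) = 0}.ncard : ℝ) =
      (fun p : ℝ × (Fin (n + 1) → ℝ) =>
        (Measure.count {x | x ∈ Set.Ioo a b ∧ g (p.2, x) = p.1}).toReal)
        (MeasurableEquiv.piFinSuccAbove (fun _ => ℝ) 0 α) := by
    intro α
    have hset : {x : ℝ | x ∈ Set.Ioo a b ∧ ∑ k, α k * x ^ (k : ℕ) = 0} =
        {x | x ∈ Set.Ioo a b ∧ g (fun k => α k.succ, x) = α 0} := by
      ext x
      refine and_congr_right fun _ => ?_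
      rw [Fin.sum_univ_succ]
      simp only [hg, neg_mul, Finset.sum_neg_distrib, Fin.val_zero, pow_zero, Fin.val_succ,
        mul_comm (α _)]
      constructor <;> intro h <;> linarith
    have hm : MeasurableSet {x | x ∈ Set.Ioo a b ∧ g (fun k => α k.succ, x) = α 0} :=
      measurableSet_Ioo.inter (measurableSet_eq_fun (by fun_prop) (by fun_prop))
    rw [hset]
    change _ = (Measure.count {x | x ∈ Set.Ioo a b ∧ g (fun k => α k.succ, x) = α 0}).toReal
    rw [Measure.count_apply hm, Set.ncard]
    -- An infinite zero set has `ncard = 0`, matching `∞.toReal = 0`.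
    cases {x | x ∈ Set.Ioo a b ∧ g (fun k => α k.succ, x) = α 0}.encard <;> simp
  rw [integral_congr_ae (ae_of_all _ hncard)]
  refine (hsplit.integral_comp' fun p : ℝ × (Fin (n + 1) → ℝ) =>
    (Measure.count {x | x ∈ Set.Ioo a b ∧ g (p.2, x) = p.1}).toReal).trans ?_
  rw [← hP, integral_toReal hmeas, hval, ENNReal.toReal_ofReal]
  · push_cast; rfl
  · have := Real.arctan_strictMono.monotone hab.le
    exact mul_nonneg (by positivity) (by linarith)
  · refine ae_lt_top' hmeas ?_
    rw [hval]
    exact ENNReal.ofReal_ne_top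
end

section
/- (Quantitative Bulinskaya lemma for the Kostlan ensemble) Let m ≥ 1 and let μ_m be the product measure on ℝ^{m+1} whose k-th factor is N(0, binom(m,k)), and for a coefficient vector α let f_α(x) = Σ_{k=0}^m α_k x^k. For every R > 0 and δ > 0 there exists τ > 0 such that μ_m { α : there exists x ∈ [−R,R] with |f_α(x)| < τ and |f_α'(x)| < τ } < δ. Equivalently, the probability that min over [−R,R] of max{|f_α(x)|, |f_α'(x)|} is less than τ is less than δ. -/
open MeasureTheory ProbabilityTheory

/-!
The bad events `E τ = {α | ∃ x ∈ [-R, R], |f_α x| < τ ∧ |f_α' x| < τ}` are open and decrease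
as `τ ↓ 0`. By compactness of `[-R, R]` their intersection over `τ = 1 / (n + 1)` consists of the
`α` for which `f_α` has a double root in `[-R, R]`. Continuity from above of the (finite) Kostlan
measure reduces the claim to this intersection being null.

For nullity, freeze `α_1, …, α_m` and let only `α_0` vary. A double root of `f_α` is a critical
point of `g = f_α - α_0` with critical value `-α_0`, and a real polynomial has only finitely many
critical values (`finite_critical_values`). The law `N(0, 1)` of `α_0` has no atoms, so each
section is null, and Fubini finishes (`measure_eq_zero_of_double_root`).
-/

/-- A real polynomial has finitely many critical values: either its derivative has finitely many
roots, or it is constant. -/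
lemma finite_critical_values (g : Polynomial ℝ) :
    {a : ℝ | ∃ x : ℝ, a + g.eval x = 0 ∧ g.derivative.eval x = 0}.Finite := by
  by_cases h : g.derivative = 0
  · rw [Polynomial.eq_C_of_derivative_eq_zero h]
    refine (Set.finite_singleton (-(g.coeff 0))).subset ?_
    rintro a ⟨x, hx, -⟩
    rw [Polynomial.eval_C] at hx
    exact eq_neg_of_add_eq_zero_left hx
  · refine ((g.derivative.roots.toFinset.finite_toSet).image (fun x => -g.eval x)).subset ?_
    rintro a ⟨x, hx, hdx⟩
    refine ⟨x, ?_, (eq_neg_of_add_eq_zero_left hx).symm⟩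
    simpa [h] using hdx

lemma hasDerivAt_coeff_sum {n : ℕ} (α : Fin n → ℝ) (x : ℝ) :
    HasDerivAt (fun y : ℝ => ∑ k : Fin n, α k * y ^ (k : ℕ))
      (∑ k : Fin n, α k * ((k : ℕ) * x ^ ((k : ℕ) - 1))) x :=
  HasDerivAt.fun_sum fun k _ => (hasDerivAt_pow (k : ℕ) x).const_mul (α k)

/-- A measurable set of coefficient vectors all of whose members have a double real root is
null. -/
lemma measure_eq_zero_of_double_root (m : ℕ) (S : Set (Fin (m + 1) → ℝ)) (hS : MeasurableSet S)
    (h : ∀ α ∈ S, ∃ x : ℝ, ∑ k : Fin (m + 1), α k * x ^ (k : ℕ) = 0 ∧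
      ∑ k : Fin (m + 1), α k * ((k : ℕ) * x ^ ((k : ℕ) - 1)) = 0) :
    (Measure.pi fun k : Fin (m + 1) => gaussianReal 0 (m.choose k)) S = 0 := by
  have hmp := (measurePreserving_piFinSuccAbove
    (fun k : Fin (m + 1) => gaussianReal 0 (m.choose k)) 0).symm
  rw [← hmp.measure_preimage_equiv, Measure.prod_apply_symm (hmp.measurable hS)]
  refine (lintegral_congr fun β => ?_).trans lintegral_zero
  have : NullSingletonClass (gaussianReal 0 (m.choose (0 : Fin (m + 1)))) :=
    nullSingletonClass_gaussianReal (by simp)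
  refine Set.Finite.measure_zero (Set.Finite.subset
    (finite_critical_values (∑ k : Fin m, Polynomial.C (β k) * Polynomial.X ^ ((k : ℕ) + 1)))
    fun a ha => ?_) _
  obtain ⟨x, hx, hdx⟩ := h _ ha
  refine ⟨x, ?_, ?_⟩
  · simpa [Fin.sum_univ_succ, Polynomial.eval_finsetSum, MeasurableEquiv.piFinSuccAbove] using hx
  · simpa [Fin.sum_univ_succ, Polynomial.eval_finsetSum, Polynomial.derivative_sum,
      MeasurableEquiv.piFinSuccAbove] using hdx

/-- (Quantitative Bulinskaya lemma for the Kostlan ensemble) Let `μ_m` be the Kostlan measure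
on coefficient vectors and `f_α(x) = Σ_k α_k x^k`. For every `R > 0` and `δ > 0` there exists
`τ > 0` such that the probability that some `x ∈ [−R,R]` has `|f_α(x)| < τ` and
`|f_α'(x)| < τ` is less than `δ`. -/
theorem bulinskaya_kostlan (m : ℕ) (hm : 1 ≤ m) (R δ : ℝ) (hR : 0 < R) (hδ : 0 < δ) :
    ∃ τ : ℝ, 0 < τ ∧
      (Measure.pi fun k : Fin (m + 1) => gaussianReal 0 (m.choose k))
          {α : Fin (m + 1) → ℝ | ∃ x ∈ Set.Icc (-R) R,
            |∑ k : Fin (m + 1), α k * x ^ (k : ℕ)| < τ ∧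
            |deriv (fun y : ℝ => ∑ k : Fin (m + 1), α k * y ^ (k : ℕ)) x| < τ}
        < ENNReal.ofReal δ := by
  simp only [(hasDerivAt_coeff_sum _ _).deriv]
  set μ := Measure.pi fun k : Fin (m + 1) => gaussianReal 0 (m.choose k) with hμ
  let E : ℝ → Set (Fin (m + 1) → ℝ) := fun τ => {α | ∃ x ∈ Set.Icc (-R) R,
    |∑ k : Fin (m + 1), α k * x ^ (k : ℕ)| < τ ∧
    |∑ k : Fin (m + 1), α k * ((k : ℕ) * x ^ ((k : ℕ) - 1))| < τ}
  have hopen : ∀ τ, IsOpen (E τ) := by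
    intro τ
    have : E τ = ⋃ x ∈ Set.Icc (-R) R, {α : Fin (m + 1) → ℝ |
        |∑ k : Fin (m + 1), α k * x ^ (k : ℕ)| < τ ∧
        |∑ k : Fin (m + 1), α k * ((k : ℕ) * x ^ ((k : ℕ) - 1))| < τ} := by
      ext α
      simp only [E, Set.mem_iUnion, Set.mem_ofPred_eq, exists_prop]
    rw [this]
    refine isOpen_biUnion fun x _ => IsOpen.and ?_ ?_
    · exact isOpen_lt (by fun_prop) continuous_const
    · exact isOpen_lt (by fun_prop) continuous_const
  let u : ℕ → ℝ := fun n => 1 / ((n : ℝ) + 1)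
  have hanti : Antitone fun n => E (u n) := by
    rintro i j hij α ⟨x, hx, h1, h2⟩
    have hu : u j ≤ u i := Nat.one_div_le_one_div hij
    exact ⟨x, hx, h1.trans_le hu, h2.trans_le hu⟩
  have hnull : μ (⋂ n, E (u n)) = 0 := by
    refine measure_eq_zero_of_double_root m _
      (MeasurableSet.iInter fun n => (hopen _).measurableSet) fun α hα => ?_
    rw [Set.mem_iInter] at hα
    -- A minimiser of `|f_α| + |f_α'|` over `[-R, R]` must be a double root.
    obtain ⟨x, -, hmin⟩ := (isCompact_Icc (a := -R) (b := R)).exists_isMinOn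
      ⟨0, by constructor <;> linarith⟩
      (f := fun x => |∑ k : Fin (m + 1), α k * x ^ (k : ℕ)| +
        |∑ k : Fin (m + 1), α k * ((k : ℕ) * x ^ ((k : ℕ) - 1))|)
      (Continuous.continuousOn (by fun_prop))
    have hle : |∑ k : Fin (m + 1), α k * x ^ (k : ℕ)| +
        |∑ k : Fin (m + 1), α k * ((k : ℕ) * x ^ ((k : ℕ) - 1))| ≤ 0 := by
      have hlim : Filter.Tendsto (fun n => u n + u n) Filter.atTop (nhds 0) := by
        simpa [u] using tendsto_one_div_add_atTop_nhds_zero_nat.add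
          (tendsto_one_div_add_atTop_nhds_zero_nat (𝕜 := ℝ))
      refine ge_of_tendsto' hlim fun n => ?_
      obtain ⟨y, hy, h1, h2⟩ := hα n
      exact (hmin hy).trans (add_le_add h1.le h2.le)
    exact ⟨x, abs_nonpos_iff.1 ((le_add_of_nonneg_right (abs_nonneg _)).trans hle),
      abs_nonpos_iff.1 ((le_add_of_nonneg_left (abs_nonneg _)).trans hle)⟩
  have htend := tendsto_measure_iInter_atTop (μ := μ)
    (fun n => (hopen (u n)).measurableSet.nullMeasurableSet) hanti ⟨0, measure_ne_top _ _⟩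
  rw [hnull] at htend
  obtain ⟨n, hn⟩ := (htend.eventually_lt_const (ENNReal.ofReal_pos.2 hδ)).exists
  exact ⟨u n, Nat.one_div_pos_of_nat, hn⟩
end

section
/- Let R₀ > 0 and R = R₀ + 1. Suppose f : ℝ → ℝ is continuously differentiable and there exists τ > 0 such that max{|f(x)|, |f'(x)|} ≥ τ for all x ∈ [−R, R]. Suppose g : ℝ → ℝ is continuous with |g(x)| ≤ τ/2 for all x ∈ [−R, R]. Then there exists an injective map from the set {x ∈ (−R₀, R₀) : f(x) = 0} into the set {x ∈ (−R, R) : f(x) + g(x) = 0}; in particular, f + g has at least as many zeros in (−R, R) as f has in (−R₀, R₀). -/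
/-!
Where `|f| < τ`, the hypothesis forces `|f'| ≥ τ`, so `f` is strictly monotone on every interval
on which `|f| < τ`. Starting at a zero `x` of `f` with, say, `f' x ≥ τ`, the function therefore
climbs with slope at least `τ` and reaches the value `τ / 2` within distance `3 / 4` to the right
of `x`, before `|f|` reaches `τ` (`exists_climb`); likewise it descends to `-τ / 2` on the left.
Since `|g| ≤ τ / 2`, the sum `f + g` changes sign in between and has a zero `y` at distance less
than `1` from `x`, with `|f| < τ` between `x` and `y` (`exists_near_zero_of_pos`,
`exists_near_zero`).

The map `x ↦ y` is injective: if two zeros of `f` share the same `y`, then `|f| < τ` on the whole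
interval between them, so `f'` does not vanish there, contradicting Rolle's theorem.
-/

/-- The derivative cannot leave `[τ, ∞)` as long as `|F| < τ`: it avoids `(-τ, τ)` there, and it
would have to cross `0`. -/
lemma deriv_ge_of_abs_lt {F F' : ℝ → ℝ} {τ c : ℝ} (hτ : 0 < τ) (hF' : Continuous F')
    (h0' : τ ≤ F' 0) (hmax : ∀ t ∈ Set.Icc (0 : ℝ) 1, τ ≤ max |F t| |F' t|) (hc : c ≤ 1)
    (hlt : ∀ t ∈ Set.Icc 0 c, |F t| < τ) : ∀ t ∈ Set.Icc 0 c, τ ≤ F' t := by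
  have habs : ∀ t ∈ Set.Icc 0 c, τ ≤ |F' t| := by
    intro t ht
    rcases le_max_iff.1 (hmax t ⟨ht.1, ht.2.trans hc⟩) with h | h
    · exact absurd (hlt t ht) (not_lt.2 h)
    · exact h
  intro t ht
  by_contra hcon
  have hneg : F' t ≤ 0 := by
    rcases le_abs.1 (habs t ht) with h | h
    · exact absurd h hcon
    · linarith
  obtain ⟨s, hs, hs0⟩ := intermediate_value_Icc' ht.1 hF'.continuousOn
    (show (0 : ℝ) ∈ Set.Icc (F' t) (F' 0) from ⟨hneg, by linarith⟩)
  have := habs s ⟨hs.1, hs.2.trans ht.2⟩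
  rw [hs0, abs_zero] at this
  linarith

/-- A function that starts at `0` with slope at least `τ` reaches the height `τ / 2` before time
`1`, with `|F| < τ` all the way. -/
lemma exists_climb {F F' : ℝ → ℝ} {τ : ℝ} (hτ : 0 < τ) (hF : ∀ t, HasDerivAt F (F' t) t)
    (hF' : Continuous F') (h0 : F 0 = 0) (h0' : τ ≤ F' 0)
    (hmax : ∀ t ∈ Set.Icc (0 : ℝ) 1, τ ≤ max |F t| |F' t|) :
    ∃ b ∈ Set.Ioo (0 : ℝ) 1, τ / 2 ≤ F b ∧ ∀ t ∈ Set.Icc 0 b, |F t| < τ := by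
  have hcont : Continuous F := continuous_iff_continuousAt.2 fun t => (hF t).continuousAt
  have hgrow : ∀ c, 0 ≤ c → c ≤ 1 → (∀ t ∈ Set.Icc 0 c, |F t| < τ) → τ * c ≤ F c := by
    intro c hc0 hc1 hlt
    have hd := deriv_ge_of_abs_lt hτ hF' h0' hmax hc1 hlt
    have := (convex_Icc 0 c).mul_sub_le_image_sub_of_le_deriv (C := τ) hcont.continuousOn
      (fun t _ => (hF t).differentiableAt.differentiableWithinAt)
      (fun t ht => by rw [(hF t).deriv]; exact hd t (interior_subset ht))
      0 ⟨le_rfl, hc0⟩ c ⟨hc0, le_rfl⟩ hc0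
    simpa [h0] using this
  -- `b` is the first time in `[0, 3 / 4]` at which `|F|` reaches `τ / 2`.
  have hcomp : IsCompact (Set.Icc (0 : ℝ) (3 / 4) ∩ {t | τ / 2 ≤ |F t|}) :=
    isCompact_Icc.inter_right (isClosed_le continuous_const hcont.abs)
  have hne : (Set.Icc (0 : ℝ) (3 / 4) ∩ {t | τ / 2 ≤ |F t|}).Nonempty := by
    by_contra hcon
    have hlt : ∀ t ∈ Set.Icc (0 : ℝ) (3 / 4), |F t| < τ / 2 := fun t ht => by
      by_contra h
      exact hcon ⟨t, ht, not_lt.1 h⟩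
    have h1 := hgrow (3 / 4) (by norm_num) (by norm_num)
      fun t ht => (hlt t ht).trans (by linarith)
    have h2 := (abs_lt.1 (hlt (3 / 4) ⟨by norm_num, le_rfl⟩)).2
    linarith
  obtain ⟨b, ⟨⟨hb0, hb1⟩, hbτ⟩, hmin⟩ := hcomp.exists_isLeast hne
  simp only [Set.mem_ofPred_eq] at hbτ
  have hbeq : |F b| = τ / 2 := by
    obtain ⟨c, hc, hcτ⟩ := intermediate_value_Icc hb0 hcont.abs.continuousOn
      (show τ / 2 ∈ Set.Icc |F 0| |F b| from ⟨by rw [h0, abs_zero]; linarith, hbτ⟩)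
    have hbc : b ≤ c := hmin ⟨⟨hc.1, hc.2.trans hb1⟩, hcτ.ge⟩
    rwa [le_antisymm hbc hc.2]
  have hlt : ∀ t ∈ Set.Icc 0 b, |F t| < τ := by
    intro t ht
    by_contra h
    have h := not_lt.1 h
    have hbt : b ≤ t := hmin ⟨⟨ht.1, ht.2.trans hb1⟩, show τ / 2 ≤ |F t| by linarith⟩
    rw [← le_antisymm hbt ht.2] at h
    linarith
  have hpos : 0 < b := by
    rcases hb0.eq_or_lt with h | h
    · rw [← h, h0, abs_zero] at hbeq
      linarith
    · exact h
  refine ⟨b, ⟨hpos, by linarith⟩, ?_, hlt⟩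
  have := hgrow b hb0 (by linarith) hlt
  have h2 : 0 ≤ F b := le_trans (by positivity) this
  rw [abs_of_nonneg h2] at hbeq
  exact hbeq.ge

lemma exists_near_zero_of_pos {f g : ℝ → ℝ} {τ x : ℝ} (hf : ContDiff ℝ 1 f) (hτ : 0 < τ)
    (hg : Continuous g) (hx : f x = 0) (hx' : τ ≤ deriv f x)
    (hfτ : ∀ t ∈ Set.Icc (x - 1) (x + 1), τ ≤ max |f t| |deriv f t|)
    (hgτ : ∀ t ∈ Set.Icc (x - 1) (x + 1), |g t| ≤ τ / 2) :
    ∃ y ∈ Set.Ioo (x - 1) (x + 1), f y + g y = 0 ∧ ∀ t ∈ Set.uIcc x y, |f t| < τ := by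
  have hd : ∀ t, HasDerivAt f (deriv f t) t := fun t =>
    (hf.differentiable one_ne_zero t).hasDerivAt
  have hcd : Continuous (deriv f) := hf.continuous_deriv le_rfl
  obtain ⟨b, hb, hbτ, hbl⟩ := exists_climb (F := fun t => f (x + t))
    (F' := fun t => deriv f (x + t)) hτ (fun t => (hd (x + t)).comp_const_add x t)
    (by fun_prop) (by simpa using hx) (by simpa using hx')
    (fun t ht => hfτ _ ⟨by linarith [ht.1], by linarith [ht.2]⟩)
  -- The left half of the picture is the right half for `t ↦ -f (x - t)`.
  obtain ⟨a, ha, haτ, hal⟩ := exists_climb (F := fun t => -f (x - t))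
    (F' := fun t => deriv f (x - t)) hτ
    (fun t => by simpa using ((hd (x - t)).comp_const_sub x t).fun_neg)
    (by fun_prop) (by simpa using hx) (by simpa using hx')
    (fun t ht => by
      simpa only [abs_neg] using hfτ (x - t) ⟨by linarith [ht.2], by linarith [ht.1]⟩)
  obtain ⟨ha0, ha1⟩ := ha
  obtain ⟨hb0, hb1⟩ := hb
  have hga := abs_le.1 (hgτ (x - a) ⟨by linarith, by linarith⟩)
  have hgb := abs_le.1 (hgτ (x + b) ⟨by linarith, by linarith⟩)
  obtain ⟨y, hy, hy0⟩ := intermediate_value_Icc (show x - a ≤ x + b by linarith)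
    (f := fun t => f t + g t) (hf.continuous.add hg).continuousOn
    (show (0 : ℝ) ∈ Set.Icc (f (x - a) + g (x - a)) (f (x + b) + g (x + b)) from
      ⟨by linarith, by linarith⟩)
  refine ⟨y, ⟨by linarith [hy.1], by linarith [hy.2]⟩, hy0, fun t ht => ?_⟩
  have htm : t ∈ Set.Icc (x - a) (x + b) :=
    Set.uIcc_subset_Icc ⟨by linarith, by linarith⟩ hy ht
  rcases le_total x t with h | h
  · simpa using hbl (t - x) ⟨by linarith, by linarith [htm.2]⟩
  · simpa using hal (x - t) ⟨by linarith, by linarith [htm.1]⟩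

lemma exists_near_zero {f g : ℝ → ℝ} {τ x : ℝ} (hf : ContDiff ℝ 1 f) (hτ : 0 < τ)
    (hg : Continuous g) (hx : f x = 0)
    (hfτ : ∀ t ∈ Set.Icc (x - 1) (x + 1), τ ≤ max |f t| |deriv f t|)
    (hgτ : ∀ t ∈ Set.Icc (x - 1) (x + 1), |g t| ≤ τ / 2) :
    ∃ y ∈ Set.Ioo (x - 1) (x + 1), f y + g y = 0 ∧ ∀ t ∈ Set.uIcc x y, |f t| < τ := by
  have hx' : τ ≤ |deriv f x| := by
    rcases le_max_iff.1 (hfτ x ⟨by linarith, by linarith⟩) with h | h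
    · rw [hx, abs_zero] at h
      linarith
    · exact h
  rcases le_abs.1 hx' with h | h
  · exact exists_near_zero_of_pos hf hτ hg hx h hfτ hgτ
  · have hdn : ∀ t, deriv (fun s => -f s) t = -deriv f t := fun t => deriv.fun_neg
    obtain ⟨y, hy, hy0, hyl⟩ := exists_near_zero_of_pos (f := fun s => -f s)
      (g := fun s => -g s) hf.neg hτ hg.neg (by simpa using hx) (by rwa [hdn])
      (fun t ht => by simpa only [hdn, abs_neg] using hfτ t ht)
      (fun t ht => by simpa only [abs_neg] using hgτ t ht)
    exact ⟨y, hy, by linarith, fun t ht => by simpa only [abs_neg] using hyl t ht⟩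

/-- Let `R = R₀ + 1`. If `f` is `C¹` with `max{|f|,|f'|} ≥ τ > 0` on `[−R,R]` and `g` is
continuous with `|g| ≤ τ/2` on `[−R,R]`, then there is an injection from the zeros of `f`
in `(−R₀,R₀)` into the zeros of `f + g` in `(−R,R)`. -/
theorem perturbation_preserves_zeros (R₀ : ℝ) (hR₀ : 0 < R₀) (R : ℝ) (hR : R = R₀ + 1)
    (f : ℝ → ℝ) (hf : ContDiff ℝ 1 f) (τ : ℝ) (hτ : 0 < τ)
    (hfτ : ∀ x ∈ Set.Icc (-R) R, τ ≤ max |f x| |deriv f x|)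
    (g : ℝ → ℝ) (hg : Continuous g) (hgτ : ∀ x ∈ Set.Icc (-R) R, |g x| ≤ τ / 2) :
    ∃ φ : {x : ℝ | x ∈ Set.Ioo (-R₀) R₀ ∧ f x = 0} →
          {x : ℝ | x ∈ Set.Ioo (-R) R ∧ f x + g x = 0},
      Function.Injective φ := by
  have hnear : ∀ x : {x : ℝ | x ∈ Set.Ioo (-R₀) R₀ ∧ f x = 0},
      ∃ y ∈ Set.Ioo (-R) R, f y + g y = 0 ∧ ∀ t ∈ Set.uIcc (x : ℝ) y, |f t| < τ := by
    rintro ⟨x, ⟨hx1, hx2⟩, hx0⟩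
    have hsub : Set.Icc (x - 1) (x + 1) ⊆ Set.Icc (-R) R :=
      Set.Icc_subset_Icc (by linarith) (by linarith)
    obtain ⟨y, hy, hy0, hyl⟩ := exists_near_zero hf hτ hg hx0
      (fun t ht => hfτ t (hsub ht)) (fun t ht => hgτ t (hsub ht))
    exact ⟨y, ⟨by linarith [hy.1], by linarith [hy.2]⟩, hy0, hyl⟩
  choose φ hφ hφ0 hφl using hnear
  refine ⟨fun x => ⟨φ x, hφ x, hφ0 x⟩, fun x₁ x₂ h => ?_⟩
  have heq : φ x₁ = φ x₂ := congrArg Subtype.val h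
  have key : ∀ u v : {x : ℝ | x ∈ Set.Ioo (-R₀) R₀ ∧ f x = 0},
      φ u = φ v → ¬ (u : ℝ) < v := by
    intro u v huv hlt
    obtain ⟨c, hc, hc0⟩ := exists_deriv_eq_zero hlt hf.continuous.continuousOn
      (u.2.2.trans v.2.2.symm)
    have hcl : |f c| < τ := by
      rcases Set.uIcc_subset_uIcc_union_uIcc (b := φ u)
        (Set.Icc_subset_uIcc (Set.Ioo_subset_Icc_self hc)) with h | h
      · exact hφl u c h
      · rw [huv, Set.uIcc_comm] at h
        exact hφl v c h
    have := hfτ c ⟨by linarith [hc.1, u.2.1.1], by linarith [hc.2, v.2.1.2]⟩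
    rw [hc0, abs_zero] at this
    exact absurd this (not_le.2 (max_lt hcl hτ))
  exact Subtype.ext (le_antisymm (not_lt.1 (key x₂ x₁ heq.symm)) (not_lt.1 (key x₁ x₂ heq)))
end

section
/- Let n > m be integers with m ≥ 2 and n ≥ 4, let ε > 0, and let q be a complex polynomial of degree m. Then the set of zeros {z ∈ ℂ : ε z^n + q(z) + conj(q(z)) = 0} is finite and has cardinality at most n(m+2), which is at most 2m(n−1) + n. -/
open Polynomial Complex

/-!
If `z` is a zero then `ε z ^ n = -2 Re (q z)` is real, so `z` lies on one of the `n` lines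
`ℝ ζ ^ k`, `k < n`, where `ζ = exp (π i / n)` (`exists_line_of_pow_im_eq_zero`). Restricted to such
a line, the real part of the equation is a real polynomial `± ε t ^ n + (terms of degree ≤ m)`.
Its `(m + 1)`-st derivative is a nonzero monomial, which has at most one distinct real root, so
Rolle's theorem, applied `m + 1` times, leaves at most `m + 2` distinct real roots
(`card_roots_le_of_gap`). This replaces Descartes' rule of signs and gives the same bound
`n (m + 2)`.
-/

/-- Rolle's theorem iterated. -/
lemma card_roots_le_iterate_derivative (p : ℝ[X]) (k : ℕ) :
    p.roots.toFinset.card ≤ (derivative^[k] p).roots.toFinset.card + k := by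
  induction k with
  | zero => simp
  | succ k ih =>
    have h := card_roots_toFinset_le_derivative (derivative^[k] p)
    rw [Function.iterate_succ_apply']
    omega

/-- A polynomial `a X ^ n + r` with `a ≠ 0` and `deg r ≤ m < n` has at most `m + 2` distinct
real roots. -/
lemma card_roots_le_of_gap {n m : ℕ} (hmn : m < n) {a : ℝ} (ha : a ≠ 0) (r : ℝ[X])
    (hr : r.natDegree ≤ m) : (C a * X ^ n + r).roots.toFinset.card ≤ m + 2 := by
  refine (card_roots_le_iterate_derivative _ (m + 1)).trans ?_
  have h0 : derivative^[m + 1] r = 0 := iterate_derivative_eq_zero (by omega)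
  have hc : a * (n.descFactorial (m + 1) : ℝ) ≠ 0 :=
    mul_ne_zero ha (by
      rw [Nat.cast_ne_zero, Ne, Nat.descFactorial_eq_zero_iff_lt]
      omega)
  have h1 : derivative^[m + 1] (C a * X ^ n + r)
      = C (a * (n.descFactorial (m + 1) : ℝ)) * X ^ (n - (m + 1)) := by
    rw [iterate_map_add, h0, iterate_derivative_C_mul, iterate_derivative_X_pow_eq_C_mul,
      add_zero, C_mul, mul_assoc]
  rw [h1, roots_C_mul_X_pow hc]
  have h2 : (((n - (m + 1)) • ({0} : Multiset ℝ)).toFinset).card ≤ 1 := by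
    refine (Finset.card_le_card (t := {0}) ?_).trans (by simp)
    intro x hx
    rw [Multiset.mem_toFinset] at hx
    simpa using Multiset.mem_of_mem_nsmul hx
  omega

/-- The set `{Im z ^ n = 0}` is a union of `n` lines: `z ^ n` is real only if `z` is a real multiple of
`ζ ^ k` with `k < n`, for `ζ` a primitive `2n`-th root of unity. -/
lemma exists_line_of_pow_im_eq_zero {n : ℕ} (hn : 0 < n) {ζ : ℂ} (hζ : IsPrimitiveRoot ζ (2 * n))
    (hζn : ζ ^ n = -1) {z : ℂ} (hz : (z ^ n).im = 0) :
    ∃ k < n, ∃ t : ℝ, z = t * ζ ^ k := by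
  by_cases h0 : z = 0
  · exact ⟨0, hn, 0, by simp [h0]⟩
  have hnz : (‖z‖ : ℂ) ≠ 0 := by simpa using h0
  have hu : (z / ‖z‖) ^ (2 * n) = 1 := by
    have h1 : z ^ (2 * n) = (‖z‖ : ℂ) ^ (2 * n) := by
      have h2 : (starRingEnd ℂ) (z ^ n) = z ^ n := conj_eq_iff_im.2 hz
      have h3 := mul_conj' (z ^ n)
      rw [h2, norm_pow] at h3
      push_cast at h3
      rw [mul_comm 2 n, pow_mul, pow_mul, sq, h3]
    rw [div_pow, h1, div_self (pow_ne_zero _ hnz)]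
  have : NeZero (2 * n) := ⟨by omega⟩
  obtain ⟨j, hj, hjz⟩ := hζ.eq_pow_of_pow_eq_one hu
  rw [eq_div_iff hnz] at hjz
  by_cases hjn : j < n
  · exact ⟨j, hjn, ‖z‖, by rw [mul_comm, hjz]⟩
  -- The second half of the roots of unity are the negatives of the first half.
  · refine ⟨j - n, by omega, -‖z‖, ?_⟩
    have h4 : ζ ^ j = ζ ^ (j - n) * ζ ^ n := by rw [← pow_add]; congr 1; omega
    rw [h4, hζn] at hjz
    push_cast
    linear_combination -hjz

/-- The polynomial `t ↦ 2 Re (q (t w))` on the real line, written out by coefficients. -/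
noncomputable def lineRe (q : ℂ[X]) (w : ℂ) : ℝ[X] :=
  ∑ i ∈ Finset.range (q.natDegree + 1), C (2 * (q.coeff i * w ^ i).re) * X ^ i

lemma natDegree_lineRe_le (q : ℂ[X]) (w : ℂ) : (lineRe q w).natDegree ≤ q.natDegree := by
  refine natDegree_sum_le_of_forall_le _ _ fun i hi => ?_
  refine (natDegree_C_mul_X_pow_le _ _).trans ?_
  have := Finset.mem_range.1 hi
  omega

lemma eval_lineRe (q : ℂ[X]) (w : ℂ) (t : ℝ) :
    (lineRe q w).eval t = 2 * (q.eval (t * w)).re := by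
  rw [lineRe, eval_finsetSum, eval_eq_sum_range, re_sum, Finset.mul_sum]
  refine Finset.sum_congr rfl fun i _ => ?_
  have h : q.coeff i * ((t : ℂ) * w) ^ i = ((t ^ i : ℝ) : ℂ) * (q.coeff i * w ^ i) := by
    push_cast
    ring
  rw [h, re_ofReal_mul]
  simp only [eval_mul, eval_C, eval_pow, eval_X]
  ring

/-- For `n > m`, `m ≥ 2`, `n ≥ 4`, `ε > 0` and `q` a complex polynomial of degree `m`, the
zero set of `ε z^n + q(z) + conj(q(z))` is finite with cardinality at most `n(m+2)`, which
is at most `2m(n−1) + n` (Descartes' rule of signs). -/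
theorem descartes_upper_bound (n m : ℕ) (hm : 2 ≤ m) (hn : 4 ≤ n) (hmn : m < n)
    (ε : ℝ) (hε : 0 < ε) (q : Polynomial ℂ) (hq : q.degree = m) :
    {z : ℂ | (ε : ℂ) * z ^ n + q.eval z + (starRingEnd ℂ) (q.eval z) = 0}.Finite ∧
    {z : ℂ | (ε : ℂ) * z ^ n + q.eval z + (starRingEnd ℂ) (q.eval z) = 0}.ncard ≤ n * (m + 2) ∧
    n * (m + 2) ≤ 2 * m * (n - 1) + n := by
  classical
  have hqm : q.natDegree = m := natDegree_eq_of_degree_eq_some hq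
  obtain ⟨ζ, hζ⟩ : ∃ ζ : ℂ, IsPrimitiveRoot ζ (2 * n) :=
    ⟨_, Complex.isPrimitiveRoot_exp (2 * n) (by omega)⟩
  have hζn : ζ ^ n = -1 :=
    (hζ.pow (by omega) (mul_comm 2 n)).eq_neg_one_of_two_right
  let P : ℕ → ℝ[X] := fun k => C (ε * (-1) ^ k) * X ^ n + lineRe q (ζ ^ k)
  have hne : ∀ k, ε * (-1 : ℝ) ^ k ≠ 0 := fun k =>
    mul_ne_zero hε.ne' (pow_ne_zero _ (by norm_num))
  have hP0 : ∀ k, P k ≠ 0 := fun k h => by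
    have hc : (P k).coeff n = ε * (-1) ^ k := by
      have : (lineRe q (ζ ^ k)).coeff n = 0 :=
        coeff_eq_zero_of_natDegree_lt ((natDegree_lineRe_le _ _).trans_lt (by omega))
      simp only [P, coeff_add, this, coeff_C_mul_X_pow, if_true, add_zero]
    rw [h, coeff_zero] at hc
    exact hne k hc.symm
  let S : Finset ℂ := (Finset.range n).biUnion fun k =>
    (P k).roots.toFinset.image fun t : ℝ => (t : ℂ) * ζ ^ k
  have hS : S.card ≤ n * (m + 2) := by
    have := Finset.card_biUnion_le_card_mul (Finset.range n)
      (fun k => (P k).roots.toFinset.image fun t : ℝ => (t : ℂ) * ζ ^ k) (m + 2) fun k _ =>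
        Finset.card_image_le.trans (card_roots_le_of_gap hmn (hne k) _
          ((natDegree_lineRe_le q (ζ ^ k)).trans hqm.le))
    rwa [Finset.card_range] at this
  have hsub : {z : ℂ | (ε : ℂ) * z ^ n + q.eval z + (starRingEnd ℂ) (q.eval z) = 0} ⊆ S := by
    intro z hz
    rw [Set.mem_ofPred_eq] at hz
    have him : (z ^ n).im = 0 := by
      have h := congrArg Complex.im hz
      simp only [add_im, im_ofReal_mul, conj_im, zero_im] at h
      have h' : ε * (z ^ n).im = 0 := by linarith
      exact (mul_eq_zero.1 h').resolve_left hε.ne'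
    obtain ⟨k, hk, t, rfl⟩ := exists_line_of_pow_im_eq_zero (by omega) hζ hζn him
    have hre := congrArg Complex.re hz
    have hpow : ((t : ℂ) * ζ ^ k) ^ n = ((t ^ n * (-1) ^ k : ℝ) : ℂ) := by
      rw [mul_pow, ← pow_mul, mul_comm k n, pow_mul, hζn]
      push_cast
      rfl
    rw [add_re, add_re, re_ofReal_mul, hpow, ofReal_re, conj_re, zero_re] at hre
    simp only [S, Finset.coe_biUnion, Set.mem_iUnion, Finset.coe_image, Finset.mem_coe,
      Finset.mem_range]
    refine ⟨k, hk, t, ?_, rfl⟩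
    rw [Finset.mem_coe, Multiset.mem_toFinset, mem_roots (hP0 k), IsRoot.def]
    simp only [P, eval_add, eval_mul, eval_C, eval_pow, eval_X, eval_lineRe]
    linarith
  refine ⟨S.finite_toSet.subset hsub, ?_, ?_⟩
  · refine (Set.ncard_le_ncard hsub S.finite_toSet).trans ?_
    rwa [Set.ncard_coe_finset]
  · obtain ⟨a, rfl⟩ := Nat.exists_eq_add_of_le hm
    obtain ⟨b, rfl⟩ := Nat.exists_eq_add_of_le hn
    have : 4 + b - 1 = 3 + b := by omega
    rw [this]
    nlinarith [Nat.zero_le (a * b)]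
end

section
/- Fix integers n > m ≥ 1 and j with 0 ≤ j ≤ n−1, and set θ_j = jπ/n. Let ν be the product measure on (ℝ × ℝ)^{m+1} whose k-th factor is N(0, (1/2)binom(m,k)) ⊗ N(0, (1/2)binom(m,k)), governing the coefficients ((a_k, b_k))_{k=0}^m. For every ε₀ > 0 there exists ε₁ > 0 such that for all 0 < ε ≤ ε₁, the expected number of real solutions r of the equation ε r^n + 2 Σ_{k=0}^m (−1)^j (a_k cos(kθ_j) − b_k sin(kθ_j)) r^k = 0, i.e. ∫ (cardinality of the solution set in ℝ) dν, is at least √m − ε₀. -/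
open MeasureTheory ProbabilityTheory
open scoped NNReal
open Filter Topology

/-!
The variables `X_k = a_k cos(kθ) - b_k sin(kθ)` are independent with law `N(0, C(m,k)/2)`
(`coeff_law`), so at `ε = 0` the equation is, up to the factor `2 (-1)^j`, the Kostlan polynomial
`p(r) = ∑ X_k r^k`, with covariance `Cov(p(x), p(y)) = (1 + x y)^m / 2`. In the coordinate
`r = tan t` the values at `s` and `t` have correlation `cos(t - s)^m`.

No Kac–Rice formula is needed for a lower bound: the number of zeros is at least the number of sign
changes along any finite grid (`sign_changes_le_ncard`). Two centred jointly Gaussian variables of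
correlation `cos α` have opposite signs with probability `α / π`, of which only `≥` is used
(`sign_change_prob`, from the area of two plane sectors in polar coordinates, `gauss_sector`). On
the grid of points `tan(-π/2 + (i + 1) δ)` with `δ = π / (M + 2)`, the expected number of sign
changes is thus at least `M arccos(cos^m δ) / π ≥ M √(2 (1 - cos^m δ)) / π`, which tends to `√m`
(`tendsto_arc`).

Fix such a grid with more than `√m - ε₀` expected sign changes at `ε = 0`. A strict sign change at
`ε = 0` persists for small `ε`, so by dominated convergence the same bound holds for all small
`ε > 0`. The integral of the number of zeros is a Bochner integral, so this function must also be
shown integrable: it is bounded by `n` (`finite_zeros`), and measurable because the set where there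
are at least `k` zeros is a countable union of projections of closed sets along compact sets
(`measurable_ncard_zeros`).
-/

/-! ### Sign changes of Gaussian pairs -/

/-- The standard Gaussian density on the plane depends only on the radius. -/
theorem gauss_polar (p : ℝ × ℝ) :
    gaussianPDF 0 1 (polarCoord.symm p).1 * gaussianPDF 0 1 (polarCoord.symm p).2 =
      gaussianPDF 0 1 p.1 * gaussianPDF 0 1 0 := by
  simp only [gaussianPDF, gaussianPDFReal, polarCoord_symm_apply]
  rw [← ENNReal.ofReal_mul (by positivity), ← ENNReal.ofReal_mul (by positivity)]
  congr 1
  rw [mul_mul_mul_comm, ← Real.exp_add, mul_mul_mul_comm, ← Real.exp_add]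
  congr 2
  have := Real.sin_sq_add_cos_sq p.2
  simp only [NNReal.coe_one, sub_zero]
  linear_combination (-p.1^2/2) * this

theorem gauss_polar_integral (f : ℝ × ℝ → ENNReal) (hf : Measurable f) :
    ∫⁻ p, f p ∂((gaussianReal 0 1).prod (gaussianReal 0 1)) =
    ∫⁻ p in Set.Ioi (0:ℝ) ×ˢ Set.Ioo (-Real.pi) Real.pi,
      ENNReal.ofReal p.1 * (gaussianPDF 0 1 p.1 * gaussianPDF 0 1 0) * f (polarCoord.symm p) := by
  rw [gaussianReal_of_var_ne_zero 0 one_ne_zero,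
    prod_withDensity (measurable_gaussianPDF 0 1) (measurable_gaussianPDF 0 1),
    lintegral_withDensity_eq_lintegral_mul _ (by fun_prop) hf, ← Measure.volume_eq_prod,
    ← lintegral_comp_polarCoord_symm, polarCoord_target]
  refine lintegral_congr fun p => ?_
  simp only [Pi.mul_apply, gauss_polar, smul_eq_mul, mul_assoc]

/-- For independent standard Gaussians `Z₁, Z₂`, the variables `Z₁` and `cos α Z₁ + sin α Z₂` have
opposite signs on two opposite sectors of angle `α`, hence with probability at least `α / π`. -/
theorem gauss_sector (α : ℝ) (h0 : 0 ≤ α) (h1 : α ≤ Real.pi / 2) :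
    ENNReal.ofReal (α / Real.pi) ≤ ((gaussianReal 0 1).prod (gaussianReal 0 1))
      {p | p.1 * (Real.cos α * p.1 + Real.sin α * p.2) < 0} := by
  have hpi := Real.pi_pos
  -- the radial mass; its value `1 / (2π)` is read off from the total mass `1` in `hκ1`
  set κ : ENNReal := ∫⁻ r in Set.Ioi (0:ℝ),
    ENNReal.ofReal r * (gaussianPDF 0 1 r * gaussianPDF 0 1 0) with hκ
  have hm : Measurable fun r : ℝ => ENNReal.ofReal r * (gaussianPDF 0 1 r * gaussianPDF 0 1 0) := by
    fun_prop
  have key : ∀ A : Set ℝ, ∫⁻ p in Set.Ioi (0:ℝ) ×ˢ A,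
      ENNReal.ofReal p.1 * (gaussianPDF 0 1 p.1 * gaussianPDF 0 1 0) = κ * volume A := by
    intro A
    rw [Measure.volume_eq_prod, ← Measure.prod_restrict,
      lintegral_prod _ (by fun_prop)]
    simp only [lintegral_const, Measure.restrict_apply_univ]
    rw [lintegral_mul_const _ hm]
  have hκ1 : κ * ENNReal.ofReal (2 * Real.pi) = 1 := by
    have := gauss_polar_integral (fun _ => 1) measurable_const
    simp only [mul_one, key, lintegral_one, measure_univ, Real.volume_Ioo] at this
    rw [this]; congr 2; ring
  have hS : MeasurableSet {p : ℝ × ℝ | p.1 * (Real.cos α * p.1 + Real.sin α * p.2) < 0} :=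
    measurableSet_lt (by fun_prop) (by fun_prop)
  rw [← lintegral_indicator_one hS, gauss_polar_integral _ (measurable_one.indicator hS)]
  set A := Set.Ioo (-(Real.pi/2)) (-(Real.pi/2) + α) ∪ Set.Ioo (Real.pi/2) (Real.pi/2 + α) with hA
  have hAm : MeasurableSet A := measurableSet_Ioo.union measurableSet_Ioo
  have hvol : volume A = ENNReal.ofReal (2 * α) := by
    rw [hA, measure_union _ measurableSet_Ioo, Real.volume_Ioo, Real.volume_Ioo,
      ← ENNReal.ofReal_add (by linarith) (by linarith)]
    · congr 1; ring
    · rw [Set.disjoint_left]; intro x hx hy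
      simp only [Set.mem_Ioo] at hx hy; linarith
  calc ENNReal.ofReal (α / Real.pi) = κ * volume A := by
        have : 2 * α = (2 * Real.pi) * (α / Real.pi) := by field_simp
        rw [hvol, this, ENNReal.ofReal_mul (by positivity), ← mul_assoc, hκ1, one_mul]
    _ = ∫⁻ p in Set.Ioi (0:ℝ) ×ˢ A,
      ENNReal.ofReal p.1 * (gaussianPDF 0 1 p.1 * gaussianPDF 0 1 0) := (key A).symm
    _ = ∫⁻ p in Set.Ioi (0:ℝ) ×ˢ A,
      ENNReal.ofReal p.1 * (gaussianPDF 0 1 p.1 * gaussianPDF 0 1 0) *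
        Set.indicator {p : ℝ × ℝ | p.1 * (Real.cos α * p.1 + Real.sin α * p.2) < 0} 1
          (polarCoord.symm p) := by
        refine setLIntegral_congr_fun (measurableSet_Ioi.prod hAm) fun p hp => ?_
        obtain ⟨hr, hp2⟩ := hp
        have hr : 0 < p.1 := hr
        have : polarCoord.symm p ∈
            {p : ℝ × ℝ | p.1 * (Real.cos α * p.1 + Real.sin α * p.2) < 0} := by
          simp only [polarCoord_symm_apply, Set.mem_ofPred_eq]
          have e : p.1 * Real.cos p.2 * (Real.cos α * (p.1 * Real.cos p.2) +
              Real.sin α * (p.1 * Real.sin p.2)) =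
              p.1 ^ 2 * (Real.cos p.2 * Real.cos (p.2 - α)) := by
            rw [Real.cos_sub]; ring
          rw [e]
          refine mul_neg_of_pos_of_neg (by positivity) ?_
          rcases hp2 with h | h
          · refine mul_neg_of_pos_of_neg (Real.cos_pos_of_mem_Ioo ⟨h.1, by linarith [h.2]⟩) ?_
            rw [← Real.cos_neg]
            exact Real.cos_neg_of_pi_div_two_lt_of_lt (by linarith [h.2]) (by linarith [h.1])
          · refine mul_neg_of_neg_of_pos
              (Real.cos_neg_of_pi_div_two_lt_of_lt (by linarith [h.1]) (by linarith [h.2])) ?_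
            exact Real.cos_pos_of_mem_Ioo ⟨by linarith [h.1], by linarith [h.2]⟩
        simp only [Set.indicator_of_mem this, Pi.one_apply, mul_one]
    _ ≤ _ := by
        refine lintegral_mono_set (Set.prod_mono_right ?_)
        rintro x (h | h)
        · exact ⟨by linarith [h.1], by linarith [h.2]⟩
        · exact ⟨by linarith [h.1], by linarith [h.2]⟩

/-- Two centred jointly Gaussian variables with correlation `cos α` have opposite signs with
probability at least `α / π`. -/
theorem sign_change_prob {Ω : Type*} [MeasurableSpace Ω] {P : Measure Ω} [IsProbabilityMeasure P]
    {U V : Ω → ℝ} (hUV : HasGaussianLaw (fun ω => (U ω, V ω)) P)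
    (hU0 : ∫ ω, U ω ∂P = 0) (hV0 : ∫ ω, V ω ∂P = 0) {σ τ α : ℝ} (hσ : 0 < σ) (hτ : 0 < τ)
    (hα0 : 0 < α) (hα1 : α ≤ Real.pi / 2)
    (hUU : cov[U, U; P] = σ ^ 2) (hVV : cov[V, V; P] = τ ^ 2)
    (hc : cov[U, V; P] = σ * τ * Real.cos α) :
    α / Real.pi ≤ P.real {ω | U ω * V ω < 0} := by
  have hs : 0 < Real.sin α := Real.sin_pos_of_pos_of_lt_pi hα0 (by linarith [Real.pi_pos])
  have hsc := Real.sin_sq_add_cos_sq α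
  -- Gram–Schmidt: `U / σ` and `a V - b U` are uncorrelated with unit variance, hence independent
  set a := (τ * Real.sin α)⁻¹ with ha
  set b := Real.cos α / (σ * Real.sin α) with hb
  let L : ℝ × ℝ →L[ℝ] ℝ × ℝ :=
    (σ⁻¹ • ContinuousLinearMap.fst ℝ ℝ ℝ).prod
      (a • ContinuousLinearMap.snd ℝ ℝ ℝ - b • ContinuousLinearMap.fst ℝ ℝ ℝ)
  have hZ : HasGaussianLaw (fun ω => (σ⁻¹ * U ω, a * V ω - b * U ω)) P := by
    have := hUV.map L
    exact this
  have hUl : MemLp U 2 P := by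
    have := (hUV.map (ContinuousLinearMap.fst ℝ ℝ ℝ)).memLp_two
    exact this
  have hVl : MemLp V 2 P := by
    have := (hUV.map (ContinuousLinearMap.snd ℝ ℝ ℝ)).memLp_two
    exact this
  have hZ1 := hZ.map (ContinuousLinearMap.fst ℝ ℝ ℝ)
  have hZ2 := hZ.map (ContinuousLinearMap.snd ℝ ℝ ℝ)
  change HasGaussianLaw (fun ω => σ⁻¹ * U ω) P at hZ1
  change HasGaussianLaw (fun ω => a * V ω - b * U ω) P at hZ2
  have hUi := hUl.integrable (by norm_num)
  have hVi := hVl.integrable (by norm_num)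
  have hVU : cov[V, U; P] = σ * τ * Real.cos α := by rw [covariance_comm, hc]
  have haV : MemLp (fun ω => a * V ω) 2 P := hVl.const_mul a
  have hbU : MemLp (fun ω => b * U ω) 2 P := hUl.const_mul b
  have hcov : cov[fun ω => σ⁻¹ * U ω, fun ω => a * V ω - b * U ω; P] = 0 := by
    rw [covariance_const_mul_left, covariance_fun_sub_right hUl haV hbU,
      covariance_const_mul_right, covariance_const_mul_right, hc, hUU, ha, hb]
    field_simp; ring
  have hind := hZ.indepFun_of_covariance_eq_zero hcov
  rw [indepFun_iff_map_prod_eq_prod_map_map hZ1.aemeasurable hZ2.aemeasurable,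
    hZ1.map_eq_gaussianReal, hZ2.map_eq_gaussianReal] at hind
  have m1 : ∫ ω, σ⁻¹ * U ω ∂P = 0 := by rw [integral_const_mul, hU0, mul_zero]
  have m2 : ∫ ω, (a * V ω - b * U ω) ∂P = 0 := by
    rw [integral_sub (hVi.const_mul a) (hUi.const_mul b), integral_const_mul, integral_const_mul,
      hU0, hV0]; ring
  have v1 : Var[fun ω => σ⁻¹ * U ω; P] = 1 := by
    rw [← covariance_self hZ1.aemeasurable, covariance_const_mul_left,
      covariance_const_mul_right, hUU]; field_simp
  have v2 : Var[fun ω => a * V ω - b * U ω; P] = 1 := by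
    rw [← covariance_self hZ2.aemeasurable, covariance_fun_sub_fun_sub haV hbU haV hbU]
    simp only [covariance_const_mul_left, covariance_const_mul_right]
    rw [hUU, hVV, hc, hVU, ha, hb]
    field_simp
    linear_combination -hsc
  rw [m1, m2, v1, v2, Real.toNNReal_one] at hind
  have hsec := gauss_sector α hα0.le hα1
  rw [← hind, Measure.map_apply_of_aemeasurable hZ.aemeasurable
    (measurableSet_lt (by fun_prop) (by fun_prop))] at hsec
  have hset : (fun ω => (σ⁻¹ * U ω, a * V ω - b * U ω)) ⁻¹'
      {p : ℝ × ℝ | p.1 * (Real.cos α * p.1 + Real.sin α * p.2) < 0} = {ω | U ω * V ω < 0} := by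
    ext ω
    simp only [Set.mem_preimage, Set.mem_ofPred_eq]
    have e : σ⁻¹ * U ω * (Real.cos α * (σ⁻¹ * U ω) + Real.sin α * (a * V ω - b * U ω)) =
        (σ * τ)⁻¹ * (U ω * V ω) := by
      rw [ha, hb]; field_simp; ring
    have hpos : 0 < (σ * τ)⁻¹ := by positivity
    rw [e]
    exact ⟨fun h => neg_of_mul_neg_right h hpos.le, mul_neg_of_pos_of_neg hpos⟩
  rw [hset] at hsec
  rw [measureReal_def]
  exact (ENNReal.ofReal_le_iff_le_toReal (measure_ne_top _ _)).1 hsec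

theorem cov_combination {Ω ι : Type*} [Fintype ι] [MeasurableSpace Ω] {P : Measure Ω}
    [IsProbabilityMeasure P]
    {X : ι → Ω → ℝ} {v : ι → ℝ} (hX : ∀ k, MemLp (X k) 2 P) (hi : iIndepFun X P)
    (hv : ∀ k, Var[X k; P] = v k) (u w : ι → ℝ) :
    cov[fun ω => ∑ k, X k ω * u k, fun ω => ∑ k, X k ω * w k; P] = ∑ k, v k * (u k * w k) := by
  classical
  rw [covariance_fun_sum_fun_sum (fun k => (hX k).mul_const _) (fun k => (hX k).mul_const _)]
  refine Finset.sum_congr rfl fun i _ => ?_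
  rw [Finset.sum_eq_single i]
  · rw [covariance_mul_const_left, covariance_mul_const_right,
      covariance_self (hX i).aemeasurable, hv]; ring
  · intro l _ hl
    rw [covariance_mul_const_left, covariance_mul_const_right,
      (hi.indepFun hl.symm).covariance_eq_zero (hX i) (hX l)]; ring
  · simp

/-- The Kostlan polynomial `∑ X_k r^k`, `X_k ∼ N(0, C(m,k)/2)`, has correlation `cos(t - s)^m`
between `tan s` and `tan t`; this bounds below the probability of a sign change between them. -/
theorem kostlan_sign_change {Ω : Type*} [MeasurableSpace Ω] {P : Measure Ω}
    [IsProbabilityMeasure P] (m : ℕ) (hm : 1 ≤ m) {X : Fin (m + 1) → Ω → ℝ}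
    (hX : ∀ k, HasGaussianLaw (X k) P) (hi : iIndepFun X P) (h0 : ∀ k, ∫ ω, X k ω ∂P = 0)
    (hv : ∀ k, Var[X k; P] = (m.choose k : ℝ) / 2) {s t : ℝ}
    (hs : s ∈ Set.Ioo (-(Real.pi / 2)) (Real.pi / 2))
    (ht : t ∈ Set.Ioo (-(Real.pi / 2)) (Real.pi / 2)) (hst : s < t) (hst' : t - s ≤ Real.pi / 2) :
    Real.arccos (Real.cos (t - s) ^ m) / Real.pi ≤
      P.real {ω | (∑ k, X k ω * Real.tan s ^ (k : ℕ)) *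
        (∑ k, X k ω * Real.tan t ^ (k : ℕ)) < 0} := by
  have hcs := Real.cos_pos_of_mem_Ioo hs
  have hct := Real.cos_pos_of_mem_Ioo ht
  have hc0 : 0 ≤ Real.cos (t - s) := Real.cos_nonneg_of_mem_Icc ⟨by linarith, by linarith⟩
  have hc1 : Real.cos (t - s) < 1 := by
    rw [← Real.cos_zero]
    exact Real.cos_lt_cos_of_nonneg_of_le_pi le_rfl (by linarith [Real.pi_pos]) (by linarith)
  have hp1 : Real.cos (t - s) ^ m < 1 := pow_lt_one₀ hc0 hc1 (by omega)
  have hG : HasGaussianLaw (fun ω => (X · ω)) P := hi.hasGaussianLaw hX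
  have hXl : ∀ k, MemLp (X k) 2 P := fun k => (hX k).memLp_two
  have hsum : ∀ x y : ℝ, ∑ k : Fin (m + 1), (m.choose k : ℝ) / 2 * (x ^ (k : ℕ) * y ^ (k : ℕ)) =
      (1 + x * y) ^ m / 2 := by
    intro x y
    rw [add_comm 1, add_pow, Finset.sum_div, Finset.sum_range]
    refine Finset.sum_congr rfl fun k _ => ?_
    rw [mul_pow]; ring
  have hmean : ∀ x : ℝ, ∫ ω, ∑ k, X k ω * x ^ (k : ℕ) ∂P = 0 := by
    intro x
    rw [integral_finsetSum _ fun k _ => ((hXl k).integrable (by norm_num)).mul_const _]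
    simp [integral_mul_const, h0]
  have htan : ∀ a b : ℝ, 0 < Real.cos a → 0 < Real.cos b →
      1 + Real.tan a * Real.tan b = Real.cos (b - a) / (Real.cos a * Real.cos b) := by
    intro a b ha hb
    rw [Real.cos_sub, Real.tan_eq_sin_div_cos, Real.tan_eq_sin_div_cos]; field_simp
  have h2 : (√2) ^ 2 = (2 : ℝ) := Real.sq_sqrt (by norm_num)
  have h2' : (0 : ℝ) < √2 := by positivity
  let E : ℝ → (Fin (m + 1) → ℝ) →L[ℝ] ℝ := fun x =>
    ∑ k : Fin (m + 1), x ^ (k : ℕ) • ContinuousLinearMap.proj (R := ℝ) (φ := fun _ : Fin (m + 1) => ℝ) k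
  refine sign_change_prob (σ := (√2 * Real.cos s ^ m)⁻¹) (τ := (√2 * Real.cos t ^ m)⁻¹) ?_
    (hmean _) (hmean _) (by positivity) (by positivity) (Real.arccos_pos.2 hp1)
    (Real.arccos_le_pi_div_two.2 (by positivity)) ?_ ?_ ?_
  · have := hG.map ((E (Real.tan s)).prod (E (Real.tan t)))
    have e : ⇑((E (Real.tan s)).prod (E (Real.tan t))) ∘ (fun ω => (X · ω)) =
        fun ω => (∑ k, X k ω * Real.tan s ^ (k : ℕ), ∑ k, X k ω * Real.tan t ^ (k : ℕ)) := by
      ext ω <;> simp [E, mul_comm]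
    rwa [e] at this
  · rw [cov_combination hXl hi hv, hsum, htan s s hcs hcs, sub_self, Real.cos_zero, div_pow,
      one_pow, mul_pow, inv_pow, mul_pow, h2]
    field_simp
  · rw [cov_combination hXl hi hv, hsum, htan t t hct hct, sub_self, Real.cos_zero, div_pow,
      one_pow, mul_pow, inv_pow, mul_pow, h2]
    field_simp
  · rw [cov_combination hXl hi hv, hsum, htan s t hcs hct,
      Real.cos_arccos (by linarith [pow_nonneg hc0 m]) hp1.le, div_pow, mul_pow]
    field_simp
    rw [h2]

/-! ### The asymptotics of the grid bound -/

theorem tendsto_arc (m : ℕ) :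
    Tendsto (fun M : ℕ => (M : ℝ) * (√(2 * (1 - Real.cos (Real.pi / (M + 2 : ℕ)) ^ m)) / Real.pi))
      atTop (𝓝 (√m)) := by
  have hpi := Real.pi_pos
  have hd : Tendsto (fun M : ℕ => Real.pi / ((M + 2 : ℕ) : ℝ)) atTop (𝓝 0) :=
    (tendsto_const_div_atTop_nhds_zero_nat Real.pi).comp (tendsto_add_atTop_nat 2)
  have hG : Continuous fun δ : ℝ =>
      √(Real.sinc (δ / 2) ^ 2 * ∑ i ∈ Finset.range m, Real.cos δ ^ i) := by
    have := Real.continuous_sinc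
    fun_prop
  have h1 := (hG.tendsto 0).comp hd
  have h2 : Tendsto (fun M : ℕ => (M : ℝ) / ((M : ℝ) + 2)) atTop (𝓝 1) := by
    exact tendsto_natCast_div_add_atTop (2 : ℝ)
  have h3 := h2.mul h1
  simp only [zero_div, Real.sinc_zero, Real.cos_zero, one_pow, Finset.sum_const, Finset.card_range,
    one_mul, nsmul_eq_mul, mul_one] at h3
  refine h3.congr fun M => ?_
  simp only [Function.comp]
  set δ := Real.pi / ((M + 2 : ℕ) : ℝ) with hδ
  have hδ0 : 0 < δ := by positivity
  have e : 2 * (1 - Real.cos δ ^ m) =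
      δ ^ 2 * (Real.sinc (δ / 2) ^ 2 * ∑ i ∈ Finset.range m, Real.cos δ ^ i) := by
    have g := mul_neg_geom_sum (Real.cos δ) m
    rw [← g, Real.sinc_of_ne_zero (by positivity)]
    have c : Real.cos δ = 1 - 2 * Real.sin (δ / 2) ^ 2 := by
      have := Real.cos_two_mul (δ / 2)
      have h := Real.sin_sq_add_cos_sq (δ / 2)
      rw [show 2 * (δ / 2) = δ by ring] at this
      rw [this]; linear_combination 2 * h
    have : 1 - Real.cos δ = 2 * Real.sin (δ / 2) ^ 2 := by rw [c]; ring
    rw [this]; field_simp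
  rw [e, Real.sqrt_mul (sq_nonneg δ), Real.sqrt_sq hδ0.le]
  have : (M : ℝ) / ((M : ℝ) + 2) = M * (δ / Real.pi) := by
    rw [hδ]; push_cast; field_simp
  rw [this]; ring

theorem sqrt_le_arccos {y : ℝ} (h0 : -1 ≤ y) (h1 : y ≤ 1) : √(2 * (1 - y)) ≤ Real.arccos y := by
  rw [Real.sqrt_le_left (Real.arccos_nonneg y)]
  have := Real.one_sub_sq_div_two_le_cos (x := Real.arccos y)
  rw [Real.cos_arccos h0 h1] at this
  linarith

/-! ### Counting zeros -/

theorem le_ncard_iff {S : Set ℝ} (hS : S.Finite) (k : ℕ) :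
    k ≤ S.ncard ↔ ∃ x : Fin k → ℝ, Function.Injective x ∧ ∀ i, x i ∈ S := by
  constructor
  · intro h
    obtain ⟨T, hT, hc⟩ := Set.exists_subset_card_eq h
    have hTf : T.Finite := hS.subset hT
    have : Fintype T := hTf.fintype
    have hcard : Fintype.card T = k := by rw [← hc, ← Nat.card_eq_fintype_card]; rfl
    let e := Fintype.equivFinOfCardEq hcard
    exact ⟨fun i => (e.symm i : ℝ), Subtype.val_injective.comp e.symm.injective,
      fun i => hT (e.symm i).2⟩
  · rintro ⟨x, hx, hxS⟩
    calc k = (Set.range x).ncard := by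
          rw [← Set.image_univ, Set.ncard_image_of_injective _ hx, Set.ncard_univ,
            Nat.card_eq_fintype_card, Fintype.card_fin]
      _ ≤ S.ncard := Set.ncard_le_ncard (by rintro _ ⟨i, rfl⟩; exact hxS i) hS

/-- The number of zeros of a function depending continuously on a parameter is a measurable
function of the parameter. -/
theorem measurable_ncard_zeros {Ω : Type*} [TopologicalSpace Ω] [MeasurableSpace Ω]
    [OpensMeasurableSpace Ω] {f : Ω → ℝ → ℝ} (hf : Continuous fun p : Ω × ℝ => f p.1 p.2)
    (hfin : ∀ c, {r | f c r = 0}.Finite) : Measurable fun c => {r | f c r = 0}.ncard := by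
  refine measurable_of_Ici fun k => ?_
  -- `k` distinct reals form a tuple of norm `≤ L` with `1/(L+1)`-separated entries for some `L`,
  -- and for fixed `L` these tuples form a compact set
  let K : ℕ → Set (Fin k → ℝ) := fun L =>
    Metric.closedBall 0 (L : ℝ) ∩ {x | ∀ i j, i ≠ j → 1 / ((L : ℝ) + 1) ≤ |x i - x j|}
  have hK : ∀ L, IsCompact (K L) := by
    intro L
    refine (isCompact_closedBall _ _).inter_right ?_
    simp only [Set.ofPred_forall]
    refine isClosed_iInter fun i => isClosed_iInter fun j => isClosed_iInter fun _ => ?_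
    exact isClosed_le continuous_const (by fun_prop)
  have heq : (fun c => {r | f c r = 0}.ncard) ⁻¹' Set.Ici k =
      ⋃ L : ℕ, Prod.snd '' {p : K L × Ω | ∀ i, f p.2 (p.1.1 i) = 0} := by
    ext c
    simp only [Set.mem_preimage, Set.mem_Ici, Set.mem_iUnion, le_ncard_iff (hfin c)]
    constructor
    · rintro ⟨x, hx, hx0⟩
      have hsep : ∀ᶠ L : ℕ in atTop, ∀ i j, i ≠ j → 1 / ((L : ℝ) + 1) ≤ |x i - x j| := by
        simp only [eventually_all]
        intro i j hij
        have hpos : 0 < |x i - x j| := abs_pos.2 (sub_ne_zero.2 fun h => hij (hx h))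
        exact (tendsto_one_div_add_atTop_nhds_zero_nat.eventually_lt_const hpos).mono
          fun _ h => h.le
      have hbd : ∀ᶠ L : ℕ in atTop, ‖x‖ ≤ (L : ℝ) :=
        tendsto_natCast_atTop_atTop.eventually_ge_atTop ‖x‖
      obtain ⟨L, h1, h2⟩ := (hsep.and hbd).exists
      exact ⟨L, ⟨⟨x, by simpa using h2, h1⟩, c⟩, hx0, rfl⟩
    · rintro ⟨L, ⟨⟨x, hxb, hxs⟩, c'⟩, h0, rfl⟩
      refine ⟨x, fun i j hij => ?_, h0⟩
      by_contra hne
      have := hxs i j hne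
      rw [hij, sub_self, abs_zero] at this
      have : 0 < 1 / ((L : ℝ) + 1) := by positivity
      linarith
  rw [heq]
  refine MeasurableSet.iUnion fun L => IsClosed.measurableSet ?_
  have := isCompact_iff_compactSpace.1 (hK L)
  refine isClosedMap_snd_of_compactSpace _ ?_
  simp only [Set.ofPred_forall]
  refine isClosed_iInter fun i => isClosed_eq ?_ continuous_const
  exact hf.comp (continuous_snd.prodMk
    ((continuous_apply i).comp (continuous_subtype_val.comp continuous_fst)))

theorem sign_changes_le_ncard {f : ℝ → ℝ} (hf : Continuous f) (hfin : {r | f r = 0}.Finite)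
    {M : ℕ} {r : ℕ → ℝ} (hr : ∀ i j, i < j → j ≤ M → r i < r j) :
    ∑ i ∈ Finset.range M, (if f (r i) * f (r (i + 1)) < 0 then (1 : ℝ) else 0) ≤
      ({r | f r = 0}.ncard : ℝ) := by
  rw [Finset.sum_boole, Nat.cast_le]
  have hz : ∀ i, ∃ x, i < M → f (r i) * f (r (i + 1)) < 0 →
      (x ∈ Set.Ioo (r i) (r (i+1)) ∧ f x = 0) := by
    intro i
    by_cases h : i < M ∧ f (r i) * f (r (i + 1)) < 0
    · have hlt := hr i (i + 1) (by omega) (by omega)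
      have hmem : (0:ℝ) ∈ f '' Set.Ioo (r i) (r (i + 1)) := by
        rcases mul_neg_iff.1 h.2 with ⟨ha, hb⟩ | ⟨ha, hb⟩
        · exact intermediate_value_Ioo' hlt.le hf.continuousOn ⟨hb, ha⟩
        · exact intermediate_value_Ioo hlt.le hf.continuousOn ⟨ha, hb⟩
      obtain ⟨x, hx, hx0⟩ := hmem
      exact ⟨x, fun _ _ => ⟨hx, hx0⟩⟩
    · exact ⟨0, fun h1 h2 => (h ⟨h1, h2⟩).elim⟩
  choose x hx using hz
  have hlt : ∀ i j, i < j → j < M → f (r i) * f (r (i + 1)) < 0 → f (r j) * f (r (j + 1)) < 0 →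
      x i < x j := by
    intro i j hij hj h1 h2
    have a := (hx i (by omega) h1).1.2
    have b := (hx j hj h2).1.1
    rcases Nat.lt_or_ge (i + 1) j with h | h
    · linarith [hr (i + 1) j h hj.le]
    · have : j = i + 1 := by omega
      subst this; linarith
  rw [← Set.ncard_coe_finset]
  refine Set.ncard_le_ncard_of_injOn x ?_ ?_ hfin
  · intro i hi
    simp only [Finset.coe_filter, Finset.mem_range, Set.mem_ofPred_eq] at hi
    exact (hx i hi.1 hi.2).2
  · intro i hi j hj hij
    simp only [Finset.coe_filter, Finset.mem_range, Set.mem_ofPred_eq] at hi hj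
    rcases lt_trichotomy i j with h | h | h
    · have := hlt i j h hj.1 hi.2 hj.2; linarith
    · exact h
    · have := hlt j i h hi.1 hj.2 hi.2; linarith

/-- The leading term `ε r^n` with `ε ≠ 0` makes the polynomial nonzero of degree `n`. -/
theorem finite_zeros {n m : ℕ} (hmn : m < n) {ε : ℝ} (hε : ε ≠ 0) (d : Fin (m + 1) → ℝ) :
    {r : ℝ | ε * r ^ n + 2 * ∑ k : Fin (m + 1), d k * r ^ (k : ℕ) = 0}.Finite ∧
    {r : ℝ | ε * r ^ n + 2 * ∑ k : Fin (m + 1), d k * r ^ (k : ℕ) = 0}.ncard ≤ n := by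
  classical
  open Polynomial in
  let q : ℝ[X] := ∑ k : Fin (m + 1), C (2 * d k) * X ^ (k : ℕ)
  let p : Polynomial ℝ := Polynomial.C ε * Polynomial.X ^ n + q
  have hq : q.natDegree < n := by
    refine lt_of_le_of_lt (Polynomial.natDegree_sum_le_of_forall_le (n := m) _ _ fun k _ => ?_) hmn
    exact (Polynomial.natDegree_C_mul_X_pow_le _ _).trans (by omega)
  have hpn : p.natDegree = n := by
    have h1 := Polynomial.natDegree_C_mul_X_pow n ε hε
    exact (Polynomial.natDegree_add_eq_left_of_natDegree_lt (by rw [h1]; exact hq)).trans h1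
  have hp : p ≠ 0 := by
    intro h; rw [h, Polynomial.natDegree_zero] at hpn; omega
  have hset : {r : ℝ | ε * r ^ n + 2 * ∑ k : Fin (m + 1), d k * r ^ (k : ℕ) = 0} =
      (p.roots.toFinset : Set ℝ) := by
    ext r
    rw [Finset.mem_coe, Multiset.mem_toFinset, Polynomial.mem_roots hp]
    simp [p, q, Polynomial.eval_finsetSum, Finset.mul_sum, mul_assoc]
  rw [hset]
  refine ⟨Finset.finite_toSet _, ?_⟩
  rw [Set.ncard_coe_finset]
  exact (Multiset.toFinset_card_le _).trans ((Polynomial.card_roots' p).trans hpn.le)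

/-! ### The random polynomial -/

/-- Rotating the pair `(a_k, b_k)` by any angle and taking the first coordinate gives independent
`N(0, C(m,k)/2)` variables. -/
theorem coeff_law (m : ℕ) (φ : Fin (m + 1) → ℝ) :
    let ν := Measure.pi fun k : Fin (m + 1) =>
            (gaussianReal 0 ((m.choose k : ℝ≥0) / 2)).prod
              (gaussianReal 0 ((m.choose k : ℝ≥0) / 2))
    let X : Fin (m + 1) → (Fin (m + 1) → ℝ × ℝ) → ℝ := fun k c =>
      (c k).1 * Real.cos (φ k) - (c k).2 * Real.sin (φ k)
    iIndepFun X ν ∧ (∀ k, HasGaussianLaw (X k) ν) ∧ (∀ k, ∫ c, X k c ∂ν = 0) ∧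
      ∀ k, Var[X k; ν] = (m.choose k : ℝ) / 2 := by
  intro ν X
  let g : Fin (m + 1) → ℝ × ℝ →L[ℝ] ℝ := fun k =>
    Real.cos (φ k) • ContinuousLinearMap.fst ℝ ℝ ℝ - Real.sin (φ k) • ContinuousLinearMap.snd ℝ ℝ ℝ
  have hXg : ∀ k, X k = g k ∘ Function.eval k := by
    intro k; ext c; simp [X, g, mul_comm]
  let γ : Fin (m + 1) → Measure ℝ := fun k => gaussianReal 0 ((m.choose k : ℝ≥0) / 2)
  have hlaw : ∀ k, ν.map (Function.eval k) = (γ k).prod (γ k) := fun k =>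
    (measurePreserving_eval _ k).map_eq
  have hmap : ∀ k, ν.map (X k) = ((γ k).prod (γ k)).map (g k) := by
    intro k
    rw [hXg, ← hlaw, Measure.map_map (g k).continuous.measurable (measurable_pi_apply k)]
  have hid : ∀ k, MemLp (fun x : ℝ => x) 2 (γ k) := fun k => memLp_id_gaussianReal 2
  have h1 : ∀ k, MemLp (fun p : ℝ × ℝ => p.1) 2 ((γ k).prod (γ k)) := fun k => (hid k).comp_fst _
  have h2 : ∀ k, MemLp (fun p : ℝ × ℝ => p.2) 2 ((γ k).prod (γ k)) := fun k => (hid k).comp_snd _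
  have hXm : ∀ k, AEMeasurable (X k) ν := fun k => by
    rw [hXg]
    exact ((g k).continuous.measurable.comp (measurable_pi_apply k)).aemeasurable
  refine ⟨?_, ?_, ?_, ?_⟩
  · have := iIndepFun_pi (μ := fun k => (γ k).prod (γ k)) (X := fun k => g k)
      fun k => (g k).continuous.measurable.aemeasurable
    convert this using 1
    ext k c
    rw [hXg]; rfl
  · intro k
    refine ⟨?_⟩
    rw [hmap]
    infer_instance
  · intro k
    have e : ∫ c, X k c ∂ν = ∫ x, x ∂(ν.map (X k)) := 
      (integral_map (f := fun x : ℝ => x) (hXm k) (by fun_prop)).symm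
    rw [e, hmap, integral_map (by fun_prop) (by fun_prop)]
    have : ∀ p : ℝ × ℝ, g k p = Real.cos (φ k) * p.1 - Real.sin (φ k) * p.2 := fun p => by simp [g]
    simp only [this]
    rw [integral_sub (((h1 k).integrable (by norm_num)).const_mul _)
      (((h2 k).integrable (by norm_num)).const_mul _), integral_const_mul, integral_const_mul,
      integral_fun_fst (fun x => x), integral_fun_snd (fun x => x)]
    simp [γ]
  · intro k
    rw [← variance_id_map (hXm k), hmap, variance_id_map (by fun_prop)]
    have : ⇑(g k) = fun p : ℝ × ℝ => Real.cos (φ k) * p.1 - Real.sin (φ k) * p.2 := by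
      ext p; simp [g]
    have hc1 : MemLp (fun p : ℝ × ℝ => Real.cos (φ k) * p.1) 2 ((γ k).prod (γ k)) :=
      (h1 k).const_mul _
    have hc2 : MemLp (fun p : ℝ × ℝ => Real.sin (φ k) * p.2) 2 ((γ k).prod (γ k)) :=
      (h2 k).const_mul _
    have hv1 : cov[fun p : ℝ × ℝ => p.1, fun p : ℝ × ℝ => p.1; (γ k).prod (γ k)] =
        (m.choose k : ℝ) / 2 := by
      rw [covariance_self (by fun_prop), ← variance_id_map (by fun_prop)]
      rw [show (fun p : ℝ × ℝ => p.1) = Prod.fst from rfl, Measure.map_fst_prod]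
      simp [γ]
    have hv2 : cov[fun p : ℝ × ℝ => p.2, fun p : ℝ × ℝ => p.2; (γ k).prod (γ k)] =
        (m.choose k : ℝ) / 2 := by
      rw [covariance_self (by fun_prop), ← variance_id_map (by fun_prop)]
      rw [show (fun p : ℝ × ℝ => p.2) = Prod.snd from rfl, Measure.map_snd_prod]
      simp [γ]
    have hv12 : cov[fun p : ℝ × ℝ => p.1, fun p : ℝ × ℝ => p.2; (γ k).prod (γ k)] = 0 :=
      covariance_fst_snd_prod (hid k) (hid k)
    have hv21 : cov[fun p : ℝ × ℝ => p.2, fun p : ℝ × ℝ => p.1; (γ k).prod (γ k)] = 0 := by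
      rw [covariance_comm, hv12]
    rw [this, ← covariance_self (by fun_prop), covariance_fun_sub_fun_sub hc1 hc2 hc1 hc2]
    simp only [covariance_const_mul_left, covariance_const_mul_right, hv1, hv2, hv12, hv21]
    linear_combination ((m.choose k : ℝ) / 2) * Real.sin_sq_add_cos_sq (φ k)

/-- Fix `n > m ≥ 1`, `0 ≤ j ≤ n−1`, `θ_j = jπ/n`, and let `ν` be the product of the measures
`N(0,(1/2)C(m,k)) ⊗ N(0,(1/2)C(m,k))` governing the coefficients `((a_k,b_k))_k`. For every
`ε₀ > 0` there exists `ε₁ > 0` such that for all `0 < ε ≤ ε₁`, the expected number of real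
solutions `r` of `ε r^n + 2 Σ_k (−1)^j (a_k cos(kθ_j) − b_k sin(kθ_j)) r^k = 0` is at least
`√m − ε₀`. -/
theorem expected_zeros_on_line (n m : ℕ) (hm : 1 ≤ m) (hmn : m < n)
    (j : ℕ) (hj : j ≤ n - 1) (ε₀ : ℝ) (hε₀ : 0 < ε₀) :
    ∃ ε₁ : ℝ, 0 < ε₁ ∧ ∀ ε : ℝ, 0 < ε → ε ≤ ε₁ →
      Real.sqrt m - ε₀ ≤
        ∫ c : Fin (m + 1) → ℝ × ℝ,
          (({r : ℝ | ε * r ^ n +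
              2 * ∑ k : Fin (m + 1), (-1 : ℝ) ^ j *
                ((c k).1 * Real.cos ((k : ℕ) * ((j : ℝ) * Real.pi / n)) -
                  (c k).2 * Real.sin ((k : ℕ) * ((j : ℝ) * Real.pi / n))) * r ^ (k : ℕ)
              = 0}.ncard : ℝ))
        ∂(Measure.pi fun k : Fin (m + 1) =>
            (gaussianReal 0 ((m.choose k : ℝ≥0) / 2)).prod
              (gaussianReal 0 ((m.choose k : ℝ≥0) / 2))) := by
  have hpi := Real.pi_pos
  obtain ⟨hind, hgauss, hmean, hvar⟩ :=
    coeff_law m (fun k => (k : ℕ) * ((j : ℝ) * Real.pi / n))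
  set ν := Measure.pi fun k : Fin (m + 1) =>
            (gaussianReal 0 ((m.choose k : ℝ≥0) / 2)).prod
              (gaussianReal 0 ((m.choose k : ℝ≥0) / 2)) with hν
  set X : Fin (m + 1) → (Fin (m + 1) → ℝ × ℝ) → ℝ := fun k c =>
    (c k).1 * Real.cos ((k : ℕ) * ((j : ℝ) * Real.pi / n)) -
      (c k).2 * Real.sin ((k : ℕ) * ((j : ℝ) * Real.pi / n)) with hX
  let f : ℝ → (Fin (m + 1) → ℝ × ℝ) → ℝ → ℝ := fun ε c r =>
    ε * r ^ n + 2 * ∑ k : Fin (m + 1), (-1 : ℝ) ^ j * X k c * r ^ (k : ℕ)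
  change ∃ ε₁ : ℝ, 0 < ε₁ ∧ ∀ ε : ℝ, 0 < ε → ε ≤ ε₁ →
      Real.sqrt m - ε₀ ≤ ∫ c, ({r | f ε c r = 0}.ncard : ℝ) ∂ν
  have hfcont : Continuous fun p : ℝ × (Fin (m + 1) → ℝ × ℝ) × ℝ => f p.1 p.2.1 p.2.2 := by
    simp only [f, hX]; fun_prop
  have hfin : ∀ ε, 0 < ε → ∀ c, {r | f ε c r = 0}.Finite ∧ {r | f ε c r = 0}.ncard ≤ n :=
    fun ε hε c => finite_zeros hmn hε.ne' fun k => (-1 : ℝ) ^ j * X k c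
  -- a grid fine enough for the expected number of sign changes to exceed `√m - ε₀`
  obtain ⟨M, hM⟩ := ((tendsto_arc m).eventually_const_lt
    (show √(m : ℝ) - ε₀ < √(m : ℝ) by linarith)).exists
  set δ := Real.pi / (M + 2 : ℕ) with hδ
  have hδ0 : 0 < δ := by positivity
  have hMδ : ((M : ℝ) + 2) * δ = Real.pi := by rw [hδ]; push_cast; field_simp
  have hM0 : (0 : ℝ) ≤ M := Nat.cast_nonneg M
  have hδ2 : δ ≤ Real.pi / 2 := by nlinarith
  let t : ℕ → ℝ := fun i => -(Real.pi / 2) + ((i : ℝ) + 1) * δ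
  have htm : ∀ i, i ≤ M → t i ∈ Set.Ioo (-(Real.pi / 2)) (Real.pi / 2) := by
    intro i hi
    have hi' : (i : ℝ) ≤ M := by exact_mod_cast hi
    have h0 : (0 : ℝ) ≤ i := Nat.cast_nonneg i
    constructor
    · simp only [t]; nlinarith
    · simp only [t]; nlinarith
  have htt : ∀ i, t (i + 1) - t i = δ := by
    intro i; simp only [t]; push_cast; ring
  let r : ℕ → ℝ := fun i => Real.tan (t i)
  have hr : ∀ i l, i < l → l ≤ M → r i < r l := by
    intro i l hil hl
    refine Real.strictMonoOn_tan (htm i (by omega)) (htm l hl) ?_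
    have : (i : ℝ) < l := by exact_mod_cast hil
    simp only [t]; nlinarith
  -- the number of sign changes along the grid
  let F : ℝ → (Fin (m + 1) → ℝ × ℝ) → ℝ := fun ε c =>
    ∑ i ∈ Finset.range M, (if f ε c (r i) * f ε c (r (i + 1)) < 0 then (1 : ℝ) else 0)
  have hfr : ∀ ε x, Continuous fun c => f ε c x := fun ε x =>
    hfcont.comp (f := fun c => (ε, c, x)) (by fun_prop)
  have hset : ∀ ε i, MeasurableSet {c | f ε c (r i) * f ε c (r (i + 1)) < 0} := fun ε i =>
    measurableSet_lt ((hfr ε _).mul (hfr ε _)).measurable measurable_const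
  have hFm : ∀ ε, Measurable (F ε) := fun ε =>
    Finset.measurable_sum _ fun i _ => Measurable.ite (hset ε i) measurable_const measurable_const
  have hF0 : ∀ ε c, 0 ≤ F ε c := fun ε c => Finset.sum_nonneg fun i _ => by split_ifs <;> norm_num
  have hFM : ∀ ε c, F ε c ≤ M := fun ε c => by
    calc F ε c ≤ ∑ i ∈ Finset.range M, (1 : ℝ) :=
          Finset.sum_le_sum fun i _ => by split_ifs <;> norm_num
      _ = M := by simp
  have hprob : ∀ i ∈ Finset.range M, Real.arccos (Real.cos δ ^ m) / Real.pi ≤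
      ν.real {c | f 0 c (r i) * f 0 c (r (i + 1)) < 0} := by
    intro i hi
    rw [Finset.mem_range] at hi
    have := kostlan_sign_change m hm hgauss hind hmean hvar (htm i hi.le) (htm (i + 1) hi)
      (by linarith [htt i]) (by rw [htt]; exact hδ2)
    rw [htt] at this
    refine this.trans_eq (congrArg ν.real ?_)
    ext c
    simp only [Set.mem_ofPred_eq]
    have hf0 : ∀ x, f 0 c x = 2 * (-1) ^ j * ∑ k, X k c * x ^ (k : ℕ) := by
      intro x
      simp only [f, zero_mul, zero_add, mul_assoc, Finset.mul_sum]
    have hsq : ((-1 : ℝ) ^ j) * (-1) ^ j = 1 := by rw [← mul_pow]; simp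
    have e : f 0 c (r i) * f 0 c (r (i + 1)) = 4 * ((∑ k, X k c * Real.tan (t i) ^ (k : ℕ)) *
        (∑ k, X k c * Real.tan (t (i + 1)) ^ (k : ℕ))) := by
      rw [hf0, hf0]
      linear_combination (4 * ((∑ k, X k c * Real.tan (t i) ^ (k : ℕ)) *
        (∑ k, X k c * Real.tan (t (i + 1)) ^ (k : ℕ)))) * hsq
    rw [e]
    exact ⟨fun h => by linarith, fun h => by linarith⟩
  have hEF : √(m : ℝ) - ε₀ < ∫ c, F 0 c ∂ν := by
    have hc0 : 0 ≤ Real.cos δ := Real.cos_nonneg_of_mem_Icc ⟨by linarith, hδ2⟩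
    have hc1 : Real.cos δ ^ m ≤ 1 := pow_le_one₀ hc0 (Real.cos_le_one δ)
    calc √(m : ℝ) - ε₀ < M * (√(2 * (1 - Real.cos δ ^ m)) / Real.pi) := hM
      _ ≤ M * (Real.arccos (Real.cos δ ^ m) / Real.pi) := by
          gcongr
          exact sqrt_le_arccos (by linarith [pow_nonneg hc0 m]) hc1
      _ = ∑ i ∈ Finset.range M, Real.arccos (Real.cos δ ^ m) / Real.pi := by simp
      _ ≤ ∑ i ∈ Finset.range M, ν.real {c | f 0 c (r i) * f 0 c (r (i + 1)) < 0} :=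
          Finset.sum_le_sum hprob
      _ = ∫ c, F 0 c ∂ν := by
          have hind1 : ∀ i, (fun c => if f 0 c (r i) * f 0 c (r (i + 1)) < 0 then (1 : ℝ) else 0) =
              Set.indicator {c | f 0 c (r i) * f 0 c (r (i + 1)) < 0} 1 := by
            intro i; ext c; simp [Set.indicator_apply]
          rw [integral_finsetSum]
          · refine Finset.sum_congr rfl fun i _ => ?_
            rw [hind1, integral_indicator_one (hset 0 i)]
          · intro i _
            rw [hind1]
            exact (integrable_const (1 : ℝ)).indicator (hset 0 i)
  -- sign changes at `ε = 0` persist for small `ε`, so `min (F ε) (F 0)` tends to `F 0`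
  have hlim : Tendsto (fun ε => ∫ c, min (F ε c) (F 0 c) ∂ν) (𝓝[>] 0) (𝓝 (∫ c, F 0 c ∂ν)) := by
    refine tendsto_integral_filter_of_dominated_convergence (fun _ => (M : ℝ)) ?_ ?_
      (integrable_const _) ?_
    · exact Eventually.of_forall fun ε => ((hFm ε).min (hFm 0)).aestronglyMeasurable
    · refine Eventually.of_forall fun ε => ae_of_all _ fun c => ?_
      rw [Real.norm_of_nonneg (le_min (hF0 _ _) (hF0 _ _))]
      exact (min_le_left _ _).trans (hFM _ _)
    · refine ae_of_all _ fun c => tendsto_nhds_of_eventually_eq ?_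
      have hev : ∀ᶠ ε in 𝓝 (0 : ℝ), ∀ i ∈ Finset.range M,
          f 0 c (r i) * f 0 c (r (i + 1)) < 0 → f ε c (r i) * f ε c (r (i + 1)) < 0 := by
        rw [Filter.eventually_all_finset]
        intro i _
        by_cases h : f 0 c (r i) * f 0 c (r (i + 1)) < 0
        · have hcε : Continuous fun ε => f ε c (r i) * f ε c (r (i + 1)) :=
            (hfcont.comp (f := fun ε => (ε, c, r i)) (by fun_prop)).mul
              (hfcont.comp (f := fun ε => (ε, c, r (i + 1))) (by fun_prop))
          exact ((hcε.tendsto 0).eventually_lt_const h).mono fun _ h _ => h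
        · exact Eventually.of_forall fun _ h' => (h h').elim
      filter_upwards [nhdsWithin_le_nhds hev] with ε hε
      refine min_eq_right (Finset.sum_le_sum fun i hi => ?_)
      by_cases h : f 0 c (r i) * f 0 c (r (i + 1)) < 0
      · rw [if_pos h, if_pos (hε i hi h)]
      · rw [if_neg h]; split_ifs <;> norm_num
  obtain ⟨ε₁, hε₁, hsub⟩ := mem_nhdsGT_iff_exists_Ioc_subset.1
    (hlim.eventually_const_lt hEF)
  refine ⟨ε₁, hε₁, fun ε hε hle => ?_⟩
  have hlt : √(m : ℝ) - ε₀ < ∫ c, min (F ε c) (F 0 c) ∂ν := hsub ⟨hε, hle⟩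
  refine hlt.le.trans (integral_mono_of_nonneg
    (ae_of_all _ fun c => le_min (hF0 _ _) (hF0 _ _)) ?_ (ae_of_all _ fun c => ?_))
  · have hmeas : Measurable fun c => ({r | f ε c r = 0}.ncard : ℝ) :=
      measurable_from_top.comp (measurable_ncard_zeros
        (hfcont.comp (f := fun p : (Fin (m + 1) → ℝ × ℝ) × ℝ => (ε, p.1, p.2)) (by fun_prop))
        fun c => (hfin ε hε c).1)
    refine Integrable.of_bound hmeas.aestronglyMeasurable (n : ℝ) (ae_of_all _ fun c => ?_)
    rw [Real.norm_of_nonneg (Nat.cast_nonneg _)]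
    exact_mod_cast (hfin ε hε c).2
  · exact (min_le_left _ _).trans (sign_changes_le_ncard
      (hfcont.comp (f := fun x => (ε, c, x)) (by fun_prop)) (hfin ε hε c).1 hr)
end
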